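/- arXiv:1012.5507 — 12 statements merged into one kernel-verified Lean document; each statement's English description precedes it below -/
import Mathlib

section
/- The tropical rank of the 6×6 real matrix A (with rows (0,0,4,4,4,4), (0,0,2,4,1,4), (4,4,0,0,4,4), (2,4,0,0,2,4), (4,4,4,4,0,0), (2,4,1,4,0,0)) equals 4. -/
/-!
Split the indices into the three blocks `{0,1}`, `{2,3}`, `{4,5}`. The diagonal `2 × 2` blocks of
`A` vanish, and the smallest entry with row in block `b` and column in block `a` is a number
`d a b`, attained at (odd row of `b`, even column of `a`). These `d a b` satisfy the triangle
inequality.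

*Upper bound.* A `5 × 5` submatrix omits a row `p` and a column `q`, in blocks `a` and `b`. With
`w i = d (block i) b`, the triangle inequality says `w j - w i ≤ A i j`, so a permutation all of
whose entries are tight here is optimal (LP duality). Such a permutation matches the blocks with
themselves, except that if `a ≠ b` the odd row of `b` goes to the even column of `a`
(`matching`). At least one block is left untouched, and exchanging its two rows gives a second
optimal permutation, since a diagonal block is zero. Hence every `5 × 5` submatrix is singular; the
full matrix is singular because it has several zero-sum permutations.

*Lower bound.* In rows `0,1,2,4` and columns `0,4,2,5` the identity is the unique optimum.

The LP-duality certificate is `tropSingular_of_tight`; its hypotheses are finite integer checks.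
-/

noncomputable section

/-- The tropical permanent of an `n × n` real matrix:
the minimum over all permutations `σ` of `∑ i, S i (σ i)`. -/
def tropPerm {n : ℕ} (S : Matrix (Fin n) (Fin n) ℝ) : ℝ :=
  ⨅ σ : Equiv.Perm (Fin n), ∑ i, S i (σ i)

/-- A square real matrix is tropically singular if the minimum in the
tropical permanent is attained by at least two distinct permutations. -/
def TropSingular {n : ℕ} (S : Matrix (Fin n) (Fin n) ℝ) : Prop :=
  ∃ σ τ : Equiv.Perm (Fin n), σ ≠ τ ∧
    (∑ i, S i (σ i)) = tropPerm S ∧ (∑ i, S i (τ i)) = tropPerm S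

/-- The tropical rank of a real matrix: the largest `r` such that the matrix
has a tropically non-singular `r × r` submatrix. -/
def tropRank {m n : ℕ} (M : Matrix (Fin m) (Fin n) ℝ) : ℕ :=
  sSup {r : ℕ | ∃ f : Fin r → Fin m, ∃ g : Fin r → Fin n,
    Function.Injective f ∧ Function.Injective g ∧ ¬ TropSingular (M.submatrix f g)}

/-- The matrix `A` from the paper. -/
def A : Matrix (Fin 6) (Fin 6) ℝ :=
  !![0, 0, 4, 4, 4, 4;
     0, 0, 2, 4, 1, 4;
     4, 4, 0, 0, 4, 4;
     2, 4, 0, 0, 2, 4;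
     4, 4, 4, 4, 0, 0;
     2, 4, 1, 4, 0, 0]

lemma tropPerm_le {n : ℕ} (S : Matrix (Fin n) (Fin n) ℝ) (σ : Equiv.Perm (Fin n)) :
    tropPerm S ≤ ∑ i, S i (σ i) :=
  ciInf_le (Set.finite_range _).bddBelow σ

/-- Complementary slackness: given a feasible dual `(u, v)`, a permutation using only tight entries
attains the tropical permanent. -/
lemma sum_eq_tropPerm {n : ℕ} (S : Matrix (Fin n) (Fin n) ℝ) (u v : Fin n → ℝ)
    (h : ∀ i j, u i + v j ≤ S i j) (σ : Equiv.Perm (Fin n)) (hσ : ∀ i, S i (σ i) = u i + v (σ i)) :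
    ∑ i, S i (σ i) = tropPerm S := by
  refine le_antisymm (le_ciInf fun τ => ?_) (tropPerm_le S σ)
  calc ∑ i, S i (σ i) = ∑ i, u i + ∑ i, v i := by
        simp only [hσ, Finset.sum_add_distrib, Equiv.sum_comp σ v]
    _ = ∑ i, (u i + v (τ i)) := by simp only [Finset.sum_add_distrib, Equiv.sum_comp τ v]
    _ ≤ ∑ i, S i (τ i) := Finset.sum_le_sum fun i _ => h i (τ i)

/-- An injection of row indices that carries the chosen rows into the chosen columns induces a
permutation of the index set of the submatrix. -/
lemma exists_perm {r m n : ℕ} {f : Fin r → Fin m} {g : Fin r → Fin n}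
    (hf : Function.Injective f) {s : Fin m → Fin n} (hs : Function.Injective s)
    (hsg : ∀ k, s (f k) ∈ Set.range g) : ∃ σ : Equiv.Perm (Fin r), ∀ k, g (σ k) = s (f k) := by
  choose e he using hsg
  have hinj : Function.Injective e := fun a b hab => hf (hs (by rw [← he a, ← he b, hab]))
  exact ⟨Equiv.ofBijective e (Finite.injective_iff_bijective.mp hinj), he⟩

/-- Two different tight matchings for a common dual `(u, v)` witness tropical singularity of a
submatrix. -/
lemma tropSingular_of_tight {r m n : ℕ} (M : Matrix (Fin m) (Fin n) ℝ)
    {f : Fin r → Fin m} {g : Fin r → Fin n} (hf : Function.Injective f)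
    (u : Fin m → ℝ) (v : Fin n → ℝ) (h : ∀ i j, u i + v j ≤ M i j)
    {s t : Fin m → Fin n} (hs : Function.Injective s) (ht : Function.Injective t)
    (hsg : ∀ k, s (f k) ∈ Set.range g) (htg : ∀ k, t (f k) ∈ Set.range g)
    (hsM : ∀ k, M (f k) (s (f k)) = u (f k) + v (s (f k)))
    (htM : ∀ k, M (f k) (t (f k)) = u (f k) + v (t (f k)))
    (hne : ∃ k, s (f k) ≠ t (f k)) : TropSingular (M.submatrix f g) := by
  obtain ⟨σ, hσ⟩ := exists_perm hf hs hsg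
  obtain ⟨τ, hτ⟩ := exists_perm hf ht htg
  obtain ⟨k, hk⟩ := hne
  refine ⟨σ, τ, fun hst => hk (by rw [← hσ, ← hτ, hst]), ?_, ?_⟩
  · exact sum_eq_tropPerm _ (u ∘ f) (v ∘ g) (fun i j => h _ _) σ fun i => by simp [hσ, hsM]
  · exact sum_eq_tropPerm _ (u ∘ f) (v ∘ g) (fun i j => h _ _) τ fun i => by simp [hτ, htM]

/-- The matrix `A` with integer entries, on which finite checks are decidable. -/
def intA : Fin 6 → Fin 6 → ℤ :=
  ![![0, 0, 4, 4, 4, 4],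
    ![0, 0, 2, 4, 1, 4],
    ![4, 4, 0, 0, 4, 4],
    ![2, 4, 0, 0, 2, 4],
    ![4, 4, 4, 4, 0, 0],
    ![2, 4, 1, 4, 0, 0]]

lemma A_apply (i j : Fin 6) : A i j = (intA i j : ℝ) := by
  fin_cases i <;> fin_cases j <;> simp [A, intA]

/-- The block `{0,1}`, `{2,3}` or `{4,5}` containing an index. -/
def block : Fin 6 → Fin 3 := ![0, 0, 1, 1, 2, 2]

/-- The even index of a block. -/
def evenOf : Fin 3 → Fin 6 := ![0, 2, 4]

/-- The odd index of a block. -/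
def oddOf : Fin 3 → Fin 6 := ![1, 3, 5]

/-- The other index of the same block. -/
def partner : Fin 6 → Fin 6 := ![1, 0, 3, 2, 5, 4]

/-- `d a b` is the smallest entry of `A` with row in block `b` and column in block `a`. -/
def d : Fin 3 → Fin 3 → ℤ := ![![0, 2, 2], ![2, 0, 1], ![1, 2, 0]]

/-- The dual potential for submatrices omitting column `q`. -/
def pot (q i : Fin 6) : ℤ := d (block i) (block q)

/-- An optimal matching of the rows other than `p` with the columns other than `q`, extended
by `p ↦ q`. -/
def matching (p q i : Fin 6) : Fin 6 :=
  if i = p then q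
  else if block p = block q then (if i = partner p then partner q else i)
  else if i = partner p then oddOf (block p)
  else if i = oddOf (block q) then evenOf (block p)
  else if i = evenOf (block q) then partner q
  else i

/-- A block containing neither `p` nor `q`. -/
def freeBlock (p q : Fin 6) : Fin 3 :=
  -- Distinct blocks `a`, `b`, `c` satisfy `a + b + c = 0` modulo `3`.
  if block p = block q then block p + 1 else -(block p + block q)

/-- The matching obtained from `matching` by exchanging the two rows of the free block. -/
def matching' (p q i : Fin 6) : Fin 6 :=
  matching p q (if block i = freeBlock p q then partner i else i)

lemma pot_feasible : ∀ q i j : Fin 6, -pot q i + pot q j ≤ intA i j := by decide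

lemma matching_injective : ∀ p q : Fin 6, Function.Injective (matching p q) := by decide

lemma matching'_injective : ∀ p q : Fin 6, Function.Injective (matching' p q) := by decide

lemma matching_self : ∀ p q : Fin 6, matching p q p = q ∧ matching' p q p = q := by decide

lemma matching_tight : ∀ p q i : Fin 6, i ≠ p →
    intA i (matching p q i) = -pot q i + pot q (matching p q i) ∧
    intA i (matching' p q i) = -pot q i + pot q (matching' p q i) := by decide

lemma matching_ne : ∀ p q : Fin 6, evenOf (freeBlock p q) ≠ p ∧
    matching p q (evenOf (freeBlock p q)) ≠ matching' p q (evenOf (freeBlock p q)) := by decide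

/-- An injection `Fin 5 → Fin 6` omits exactly one value. -/
lemma exists_range_eq {f : Fin 5 → Fin 6} (hf : Function.Injective f) :
    ∃ p, ∀ i, i ∈ Set.range f ↔ i ≠ p := by
  have hc : (Finset.univ.image f)ᶜ.card = 1 := by
    rw [Finset.card_compl, Finset.card_image_of_injective _ hf]; simp
  obtain ⟨p, hp⟩ := Finset.card_eq_one.mp hc
  refine ⟨p, fun i => ?_⟩
  have := Finset.ext_iff.mp hp i
  simp only [Finset.mem_compl, Finset.mem_image, Finset.mem_univ, true_and,
    Finset.mem_singleton] at this
  rw [Set.mem_range, ne_eq, ← this, not_not]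

lemma singular_five {f g : Fin 5 → Fin 6} (hf : Function.Injective f)
    (hg : Function.Injective g) : TropSingular (A.submatrix f g) := by
  obtain ⟨p, hp⟩ := exists_range_eq hf
  obtain ⟨q, hq⟩ := exists_range_eq hg
  have hfp (k) : f k ≠ p := (hp _).mp ⟨k, rfl⟩
  refine tropSingular_of_tight A hf (fun i => -(pot q i : ℝ)) (fun j => (pot q j : ℝ))
    (fun i j => ?_) (matching_injective p q) (matching'_injective p q)
    (fun k => (hq _).mpr fun h => hfp k ?_) (fun k => (hq _).mpr fun h => hfp k ?_)
    (fun k => ?_) (fun k => ?_) ?_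
  · rw [A_apply]; exact_mod_cast pot_feasible q i j
  · exact matching_injective p q (h.trans (matching_self p q).1.symm)
  · exact matching'_injective p q (h.trans (matching_self p q).2.symm)
  · rw [A_apply]; exact_mod_cast (matching_tight p q _ (hfp k)).1
  · rw [A_apply]; exact_mod_cast (matching_tight p q _ (hfp k)).2
  · obtain ⟨h₁, h₂⟩ := matching_ne p q
    obtain ⟨k, hk⟩ := (hp _).mpr h₁
    exact ⟨k, by rwa [hk]⟩

lemma singular_six {f g : Fin 6 → Fin 6} (hf : Function.Injective f)
    (hg : Function.Injective g) : TropSingular (A.submatrix f g) := by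
  have hf' := Finite.surjective_of_injective hf
  have hg' := Finite.surjective_of_injective hg
  have h0 : ∀ i j, 0 ≤ intA i j := by decide
  have h1 : ∀ i, intA i i = 0 := by decide
  have h2 : ∀ i, intA i (partner i) = 0 := by decide
  have hinj : Function.Injective partner := by decide
  refine tropSingular_of_tight A hf (fun _ => 0) (fun _ => 0) (fun i j => ?_)
    Function.injective_id hinj (fun k => hg' _) (fun k => hg' _) (fun k => ?_) (fun k => ?_) ?_
  · rw [A_apply]; simpa using h0 i j
  · rw [A_apply]; simpa using h1 (f k)
  · rw [A_apply]; simpa using h2 (f k)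
  · obtain ⟨k, hk⟩ := hf' 0
    exact ⟨k, by rw [hk]; decide⟩

lemma nonsingular_four : ¬ TropSingular (A.submatrix ![0, 1, 2, 4] ![0, 4, 2, 5]) := by
  have key : ∀ σ : Equiv.Perm (Fin 4), σ ≠ 1 →
      1 < ∑ i, intA (![0, 1, 2, 4] i) (![0, 4, 2, 5] (σ i)) := by decide
  have hone : ∑ i, intA (![0, 1, 2, 4] i) (![0, 4, 2, 5] i) = 1 := by decide
  have huniq (σ : Equiv.Perm (Fin 4))
      (h : ∑ i, (A.submatrix ![0, 1, 2, 4] ![0, 4, 2, 5]) i (σ i) =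
        tropPerm (A.submatrix ![0, 1, 2, 4] ![0, 4, 2, 5])) : σ = 1 := by
    by_contra hσ
    have hle := h.trans_le (tropPerm_le _ 1)
    simp only [Matrix.submatrix_apply, A_apply, Equiv.Perm.one_apply] at hle
    have hle' : ∑ i, intA (![0, 1, 2, 4] i) (![0, 4, 2, 5] (σ i)) ≤
        ∑ i, intA (![0, 1, 2, 4] i) (![0, 4, 2, 5] i) := by exact_mod_cast hle
    rw [hone] at hle'
    exact absurd (key σ hσ) (not_lt.mpr hle')
  rintro ⟨σ, τ, hne, hσ, hτ⟩
  exact hne ((huniq σ hσ).trans (huniq τ hτ).symm)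

theorem tropRank_A_eq_four : tropRank A = 4 := by
  refine IsGreatest.csSup_eq
    ⟨⟨![0, 1, 2, 4], ![0, 4, 2, 5], by decide, by decide, nonsingular_four⟩, ?_⟩
  rintro r ⟨f, g, hf, hg, hns⟩
  by_contra! hr
  have hr6 : r ≤ 6 := by simpa using Fintype.card_le_of_injective f hf
  obtain rfl | rfl : r = 5 ∨ r = 6 := by omega
  · exact hns (singular_five hf hg)
  · exact hns (singular_six hf hg)
end
end

section
/- Every 5×5 submatrix of the 6×6 real matrix A (obtained by deleting one row and one column) is tropically singular; consequently the tropical rank of A is at most 4. -/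
/-! Split the indices into the blocks `{0,1}`, `{2,3}`, `{4,5}`. The entries in a diagonal block vanish,
and the smallest entry `d x y` in the block `(x, y)` satisfies the triangle inequality. So for every
block `a` the potential `p x = d x a` gives `p (block r) - p (block c) ≤ A r c`. If row `i` in block
`a` and column `j` in block `b` are deleted, summing along a permutation shows that every permutation
sum is at least `d b a`, with equality exactly when all entries used are tight.

Equality is attained by one cheapest entry in the block `(b, a)` and otherwise zero entries of
diagonal blocks. A block different from `a` and `b` is then matched with itself, so its two zero
matchings give two minimisers. In short, `tropSingular_of_potential` reduces singularity to finding
two tight permutations, which is the finite check `exists_tight`.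

For the rank, a submatrix of size 5 is a row and column permutation of one of these minors, and a
submatrix of size 6 is such a permutation of `A`, which has several zero permutation sums and no
negative entries.
-/

noncomputable section

theorem tropSingular_iff {n : ℕ} (S : Matrix (Fin n) (Fin n) ℝ) :
    TropSingular S ↔ ∃ σ τ : Equiv.Perm (Fin n), σ ≠ τ ∧
      (∀ ρ : Equiv.Perm (Fin n), ∑ i, S i (σ i) ≤ ∑ i, S i (ρ i)) ∧
      (∀ ρ : Equiv.Perm (Fin n), ∑ i, S i (τ i) ≤ ∑ i, S i (ρ i)) := by
  have key : ∀ σ : Equiv.Perm (Fin n), (∑ i, S i (σ i)) = tropPerm S ↔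
      ∀ ρ : Equiv.Perm (Fin n), ∑ i, S i (σ i) ≤ ∑ i, S i (ρ i) := by
    intro σ
    have hb : BddBelow (Set.range fun ρ : Equiv.Perm (Fin n) => ∑ i, S i (ρ i)) :=
      (Set.finite_range _).bddBelow
    constructor
    · intro h ρ
      rw [h]
      exact ciInf_le hb ρ
    · intro h
      exact le_antisymm (le_ciInf h) (ciInf_le hb σ)
  simp only [TropSingular, key]

theorem TropSingular.submatrix_perm {n : ℕ} {S : Matrix (Fin n) (Fin n) ℝ} (h : TropSingular S)
    (e e' : Equiv.Perm (Fin n)) : TropSingular (S.submatrix e e') := by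
  rw [tropSingular_iff] at h ⊢
  obtain ⟨σ, τ, hne, hσ, hτ⟩ := h
  have sum_conj : ∀ ρ : Equiv.Perm (Fin n),
      ∑ i, S.submatrix e e' i ((e'⁻¹ * ρ * e) i) = ∑ i, S i (ρ i) := by
    intro ρ
    rw [← Equiv.sum_comp e (fun i => S i (ρ i))]
    simp
  have eq_conj : ∀ ρ : Equiv.Perm (Fin n), ρ = e'⁻¹ * (e' * ρ * e⁻¹) * e := by
    intro ρ
    group
  refine ⟨e'⁻¹ * σ * e, e'⁻¹ * τ * e, by simpa using hne, fun ρ => ?_, fun ρ => ?_⟩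
  · rw [eq_conj ρ, sum_conj, sum_conj]
    exact hσ _
  · rw [eq_conj ρ, sum_conj, sum_conj]
    exact hτ _

/-- Weak duality for the assignment problem: `u r - v c ≤ S r c` bounds all permutation sums below
by the same constant, so two permutations using only tight entries are both minimisers. -/
theorem tropSingular_of_potential {n : ℕ} {S : Matrix (Fin n) (Fin n) ℝ} (u v : Fin n → ℝ)
    (hS : ∀ r c, u r - v c ≤ S r c) {σ τ : Equiv.Perm (Fin n)} (hne : σ ≠ τ)
    (hσ : ∀ r, S r (σ r) = u r - v (σ r)) (hτ : ∀ r, S r (τ r) = u r - v (τ r)) :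
    TropSingular S := by
  rw [tropSingular_iff]
  have hsum : ∀ ρ : Equiv.Perm (Fin n), ∑ r, (u r - v (ρ r)) = ∑ r, u r - ∑ r, v r := by
    intro ρ
    rw [Finset.sum_sub_distrib, Equiv.sum_comp ρ v]
  have hle : ∀ ρ : Equiv.Perm (Fin n), ∑ r, u r - ∑ r, v r ≤ ∑ r, S r (ρ r) := by
    intro ρ
    rw [← hsum ρ]
    exact Finset.sum_le_sum fun r _ => hS r (ρ r)
  refine ⟨σ, τ, hne, fun ρ => ?_, fun ρ => ?_⟩
  · rw [Finset.sum_congr rfl fun r _ => hσ r, hsum]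
    exact hle ρ
  · rw [Finset.sum_congr rfl fun r _ => hτ r, hsum]
    exact hle ρ

theorem A_eq_intA (r c : Fin 6) : A r c = (intA r c : ℝ) := by
  fin_cases r <;> fin_cases c <;> simp [A, intA]

/-- The smallest entry of `A` in each of the nine `2 × 2` blocks. -/
def blockMin : Fin 3 → Fin 3 → ℤ :=
  ![![0, 2, 1],
    ![2, 0, 2],
    ![2, 1, 0]]

/-- Combines `blockMin (block r) (block c) ≤ intA r c` with the triangle inequality for
`blockMin`. -/
theorem potential_le (a : Fin 3) (r c : Fin 6) :
    blockMin (block r) a - blockMin (block c) a ≤ intA r c := by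
  revert a r c
  decide +kernel

/-- Every minor has a permutation through tight entries that stays tight after exchanging the
columns of two rows, for instance the rows of a block containing neither deleted line. -/
theorem exists_tight : ∀ i j : Fin 6, ∃ σ : Equiv.Perm (Fin 5),
    (∀ k, intA (i.succAbove k) (j.succAbove (σ k)) =
      blockMin (block (i.succAbove k)) (block i) -
        blockMin (block (j.succAbove (σ k))) (block i)) ∧
    ∃ x y : Fin 5, x ≠ y ∧
      ∀ k, intA (i.succAbove k) (j.succAbove ((σ * Equiv.swap x y) k)) =
        blockMin (block (i.succAbove k)) (block i) -
          blockMin (block (j.succAbove ((σ * Equiv.swap x y) k))) (block i) := by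
  decide +kernel

theorem tropSingular_minor (i j : Fin 6) :
    TropSingular (A.submatrix (Fin.succAbove i) (Fin.succAbove j)) := by
  obtain ⟨σ, hσ, x, y, hxy, hτ⟩ := exists_tight i j
  refine tropSingular_of_potential
    (fun r => (blockMin (block (i.succAbove r)) (block i) : ℝ))
    (fun c => (blockMin (block (j.succAbove c)) (block i) : ℝ))
    (fun r c => ?_) (σ := σ) (τ := σ * Equiv.swap x y) ?_ (fun r => ?_) (fun r => ?_)
  · rw [Matrix.submatrix_apply, A_eq_intA]
    exact_mod_cast potential_le (block i) (i.succAbove r) (j.succAbove c)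
  · intro h
    exact hxy (Equiv.swap_eq_one_iff.mp (left_eq_mul.mp h))
  · rw [Matrix.submatrix_apply, A_eq_intA]
    exact_mod_cast hσ r
  · rw [Matrix.submatrix_apply, A_eq_intA]
    exact_mod_cast hτ r

theorem tropSingular_A : TropSingular A := by
  have h0 : ∀ r c, 0 ≤ intA r c := by decide
  have h1 : ∀ r, intA r r = 0 := by decide
  have h2 : ∀ r, intA r (Equiv.swap (0 : Fin 6) 1 r) = 0 := by decide
  refine tropSingular_of_potential (fun _ => 0) (fun _ => 0) (fun r c => ?_)
    (σ := 1) (τ := Equiv.swap 0 1) (by decide) (fun r => ?_) (fun r => ?_)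
  · rw [A_eq_intA, sub_zero]
    exact_mod_cast h0 r c
  · simp [A_eq_intA, h1]
  · simp [A_eq_intA, h2]

theorem exists_perm_of_injective {n : ℕ} {f : Fin n → Fin n} (hf : Function.Injective f) :
    ∃ e : Equiv.Perm (Fin n), f = e :=
  ⟨Equiv.ofBijective f (Finite.injective_iff_bijective.mp hf), rfl⟩

theorem exists_succAbove_comp_perm {n : ℕ} {f : Fin n → Fin (n + 1)}
    (hf : Function.Injective f) :
    ∃ (i : Fin (n + 1)) (e : Equiv.Perm (Fin n)), f = i.succAbove ∘ e := by
  have hns : ¬ Function.Surjective f := by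
    intro hs
    simpa using Fintype.card_le_of_surjective f hs
  obtain ⟨i, hi⟩ := not_forall.mp hns
  choose g hg using fun k => Fin.exists_succAbove_eq (fun h : f k = i => hi ⟨k, h⟩)
  have hfg : f = i.succAbove ∘ g := funext fun k => (hg k).symm
  have hginj : Function.Injective g := by
    rw [hfg] at hf
    exact hf.of_comp
  obtain ⟨e, rfl⟩ := exists_perm_of_injective hginj
  exact ⟨i, e, hfg⟩

theorem every_five_submatrix_singular :
    (∀ i j : Fin 6,
      TropSingular (A.submatrix (Fin.succAbove i) (Fin.succAbove j))) ∧
    tropRank A ≤ 4 := by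
  refine ⟨tropSingular_minor, csSup_le' ?_⟩
  rintro r ⟨f, g, hf, hg, hns⟩
  by_contra! hr
  have hr6 : r ≤ 6 := by simpa using Fintype.card_le_of_injective f hf
  obtain rfl | rfl : r = 5 ∨ r = 6 := by omega
  · obtain ⟨i, e, rfl⟩ := exists_succAbove_comp_perm hf
    obtain ⟨j, e', rfl⟩ := exists_succAbove_comp_perm hg
    exact hns ((tropSingular_minor i j).submatrix_perm e e')
  · obtain ⟨e, rfl⟩ := exists_perm_of_injective hf
    obtain ⟨e', rfl⟩ := exists_perm_of_injective hg
    exact hns (tropSingular_A.submatrix_perm e e')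
end
end

section
/- Let S be a 5×5 real matrix of the form with rows (0, 4, 4, 4, 4), (0, x, 4, y, 4), (s₃₁, 0, 0, 4, 4), (s₄₁, 0, 0, z, 4), (s₅₁, s₅₂, s₅₃, 0, 0), where x, y, z ∈ {1,2} and s₃₁, s₄₁, s₅₁, s₅₂, s₅₃ ∈ {1,2,4}. Then the tropical permanent of S equals y, the minimum in the tropical permanent is attained at both the transposition (2 4) and the 3-cycle (2 4 3), and in particular S is tropically singular. -/
/-!
The lower bound is linear programming duality for the assignment problem: if `u i + v j ≤ S i j`
for all `i, j`, then every permutation has weight at least `∑ i, u i + ∑ j, v j`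
(`sum_add_sum_le_sum_perm`). Here the potentials `u = (y, y, 1, 1, 0)` and `v = (-y, -1, -1, 0, 0)`
are feasible and have total `y`, and both the transposition and the 3-cycle of the statement have
weight exactly `y`.
-/

noncomputable section

/-- Weak duality for the assignment problem: a pair of feasible potentials bounds from below the
weight of every permutation. -/
theorem sum_add_sum_le_sum_perm {n : ℕ} (S : Matrix (Fin n) (Fin n) ℝ) (u v : Fin n → ℝ)
    (h : ∀ i j, u i + v j ≤ S i j) (σ : Equiv.Perm (Fin n)) :
    ∑ i, u i + ∑ j, v j ≤ ∑ i, S i (σ i) := by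
  rw [← Equiv.sum_comp σ v, ← Finset.sum_add_distrib]
  exact Finset.sum_le_sum fun i _ => h i (σ i)

theorem form_S''_singular (x y z s31 s41 s51 s52 s53 : ℝ)
    (hx : x ∈ ({1, 2} : Set ℝ)) (hy : y ∈ ({1, 2} : Set ℝ)) (hz : z ∈ ({1, 2} : Set ℝ))
    (h31 : s31 ∈ ({1, 2, 4} : Set ℝ)) (h41 : s41 ∈ ({1, 2, 4} : Set ℝ))
    (h51 : s51 ∈ ({1, 2, 4} : Set ℝ)) (h52 : s52 ∈ ({1, 2, 4} : Set ℝ))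
    (h53 : s53 ∈ ({1, 2, 4} : Set ℝ))
    (S : Matrix (Fin 5) (Fin 5) ℝ)
    (hS : S = !![0,   4,   4,   4, 4;
                 0,   x,   4,   y, 4;
                 s31, 0,   0,   4, 4;
                 s41, 0,   0,   z, 4;
                 s51, s52, s53, 0, 0]) :
    tropPerm S = y ∧
    (∑ i, S i (Equiv.swap 1 3 i)) = tropPerm S ∧
    (∑ i, S i ((Equiv.swap 1 3 * Equiv.swap 3 2 : Equiv.Perm (Fin 5)) i)) = tropPerm S ∧
    TropSingular S := by

  simp only [Set.mem_insert_iff, Set.mem_singleton_iff] at hx hy hz h31 h41 h51 h52 h53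
  have bounds : ∀ a : ℝ, a = 1 ∨ a = 2 → 1 ≤ a ∧ a ≤ 2 := by
    rintro a (rfl | rfl) <;> norm_num
  have nonneg : ∀ a : ℝ, a = 1 ∨ a = 2 ∨ a = 4 → 0 ≤ a := by
    rintro a (rfl | rfl | rfl) <;> norm_num
  obtain ⟨hx1, hx2⟩ := bounds x hx
  obtain ⟨hy1, hy2⟩ := bounds y hy
  obtain ⟨hz1, hz2⟩ := bounds z hz
  replace h31 := nonneg _ h31
  replace h41 := nonneg _ h41
  replace h51 := nonneg _ h51
  replace h52 := nonneg _ h52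
  replace h53 := nonneg _ h53
  have feasible : ∀ i j, ![y, y, 1, 1, 0] i + ![-y, -1, -1, 0, 0] j ≤ S i j := by
    intro i j
    subst hS
    fin_cases i <;> fin_cases j <;> simp <;> linarith
  have lower : ∀ σ : Equiv.Perm (Fin 5), y ≤ ∑ i, S i (σ i) := by
    intro σ
    refine le_trans (le_of_eq ?_) (sum_add_sum_le_sum_perm S _ _ feasible σ)
    simp [Fin.sum_univ_five]
    ring
  have hswap : ∑ i, S i (Equiv.swap 1 3 i) = y := by
    have e0 : Equiv.swap (1 : Fin 5) 3 0 = 0 := by decide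
    have e1 : Equiv.swap (1 : Fin 5) 3 1 = 3 := by decide
    have e2 : Equiv.swap (1 : Fin 5) 3 2 = 2 := by decide
    have e3 : Equiv.swap (1 : Fin 5) 3 3 = 1 := by decide
    have e4 : Equiv.swap (1 : Fin 5) 3 4 = 4 := by decide
    rw [Fin.sum_univ_five, e0, e1, e2, e3, e4, hS]
    simp
  have hcycle :
      ∑ i, S i ((Equiv.swap 1 3 * Equiv.swap 3 2 : Equiv.Perm (Fin 5)) i) = y := by
    have e0 : (Equiv.swap 1 3 * Equiv.swap 3 2 : Equiv.Perm (Fin 5)) 0 = 0 := by decide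
    have e1 : (Equiv.swap 1 3 * Equiv.swap 3 2 : Equiv.Perm (Fin 5)) 1 = 3 := by decide
    have e2 : (Equiv.swap 1 3 * Equiv.swap 3 2 : Equiv.Perm (Fin 5)) 2 = 1 := by decide
    have e3 : (Equiv.swap 1 3 * Equiv.swap 3 2 : Equiv.Perm (Fin 5)) 3 = 2 := by decide
    have e4 : (Equiv.swap 1 3 * Equiv.swap 3 2 : Equiv.Perm (Fin 5)) 4 = 4 := by decide
    rw [Fin.sum_univ_five, e0, e1, e2, e3, e4, hS]
    simp
  have hperm : tropPerm S = y := by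
    apply le_antisymm
    · exact (ciInf_le ⟨y, Set.forall_mem_range.2 lower⟩ (Equiv.swap 1 3)).trans hswap.le
    · exact le_ciInf lower
  refine ⟨hperm, hswap.trans hperm.symm, hcycle.trans hperm.symm,
    Equiv.swap 1 3, Equiv.swap 1 3 * Equiv.swap 3 2, by decide,
    hswap.trans hperm.symm, hcycle.trans hperm.symm⟩
end
end

section
/- The Kapranov rank of the 6×6 real matrix A is at most 5, i.e. there exists a lift B ∈ K^{6×6} of A whose rank over K is at most 5. -/
/-!
In every row of `A` the minimal entry `0` occurs at least twice, and all entries are nonnegative.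
Hence a lift whose rows sum to zero can be written down: put the monomial `t ^ (A i j)` everywhere
except at one zero of each row, and put there minus the sum of the other monomials of the row. The
second zero of the row makes the constant coefficient of that sum a positive integer, so the
entry still has order `0`. The all-ones vector lies in the kernel of this lift, which is therefore
singular and has rank at most `5`. The construction is `exists_isLift_mulVec_one_eq_zero`,
the rank bound `rank_lt_of_mulVec_one_eq_zero`.
-/

noncomputable section

/-- The field of Hahn series over `ℂ` with value group `ℝ`. -/
abbrev K : Type := HahnSeries ℝ ℂ

/-- A matrix over `K` is a lift of a real matrix `T` if every entry is nonzero
and its order (the least exponent of its support) is the corresponding entry of `T`. -/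
def IsLift {m n : ℕ} (B : Matrix (Fin m) (Fin n) K) (T : Matrix (Fin m) (Fin n) ℝ) : Prop :=
  ∀ i j, B i j ≠ 0 ∧ (B i j).order = T i j

/-- The Kapranov rank of a real matrix: the minimum rank over `K` of a lift. -/
def kapRank {m n : ℕ} (M : Matrix (Fin m) (Fin n) ℝ) : ℕ :=
  sInf {r : ℕ | ∃ B : Matrix (Fin m) (Fin n) K, IsLift B M ∧ B.rank = r}

lemma order_eq_zero_of_coeff {f : K} (h0 : f.coeff 0 ≠ 0) (hneg : ∀ a < 0, f.coeff a = 0) :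
    f ≠ 0 ∧ f.order = 0 := by
  have hf : f ≠ 0 := by
    rintro rfl
    exact h0 rfl
  refine ⟨hf, le_antisymm (HahnSeries.order_le_of_coeff_ne_zero h0) ?_⟩
  by_contra! h
  exact hf (HahnSeries.coeff_order_eq_zero.mp (hneg _ h))

/-- The minimum `0` is attained at least twice in each row, at `p i` and `q i`. -/
lemma exists_isLift_mulVec_one_eq_zero {m n : ℕ} (T : Matrix (Fin m) (Fin n) ℝ)
    (p q : Fin m → Fin n) (hpq : ∀ i, q i ≠ p i) (hp : ∀ i, T i (p i) = 0)
    (hq : ∀ i, T i (q i) = 0) (hT : ∀ i j, 0 ≤ T i j) :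
    ∃ B : Matrix (Fin m) (Fin n) K, IsLift B T ∧ B.mulVec 1 = 0 := by
  refine ⟨fun i j => if j = p i then -∑ k ∈ Finset.univ.erase (p i), HahnSeries.single (T i k) 1
    else HahnSeries.single (T i j) 1, fun i j => ?_, ?_⟩
  · by_cases hj : j = p i
    · subst hj
      simp only [if_true, hp]
      apply order_eq_zero_of_coeff
      · -- the constant coefficient is minus the number of zeros of row `i` outside `p i`
        simp only [HahnSeries.coeff_neg, HahnSeries.coeff_sum, HahnSeries.coeff_single,
          Finset.sum_boole, neg_ne_zero, Nat.cast_ne_zero]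
        exact Finset.card_ne_zero_of_mem (a := q i) (by simp [hpq, hq])
      · intro a ha
        rw [HahnSeries.coeff_neg, HahnSeries.coeff_sum, neg_eq_zero]
        exact Finset.sum_eq_zero fun k _ =>
          HahnSeries.coeff_single_of_ne (ha.trans_le (hT i k)).ne
    · simp only [if_neg hj]
      exact ⟨HahnSeries.single_ne_zero one_ne_zero, HahnSeries.order_single one_ne_zero⟩
  · funext i
    simp only [Matrix.mulVec, dotProduct, Pi.one_apply, mul_one, Pi.zero_apply]
    rw [← Finset.add_sum_erase _ _ (Finset.mem_univ (p i)), if_pos rfl, neg_add_eq_zero]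
    exact Finset.sum_congr rfl fun k hk => (if_neg (Finset.ne_of_mem_erase hk)).symm

lemma rank_lt_of_mulVec_one_eq_zero {m n : ℕ} (B : Matrix (Fin m) (Fin (n + 1)) K)
    (h : B.mulVec 1 = 0) : B.rank < n + 1 := by
  have hker : 0 < Module.finrank K (LinearMap.ker B.mulVecLin) := by
    refine (Module.finrank_pos_iff_exists_ne_zero (R := K)
      (M := LinearMap.ker B.mulVecLin)).mpr ?_
    exact ⟨⟨1, h⟩, fun h1 => one_ne_zero (congrArg Subtype.val h1)⟩
  have hsum := B.mulVecLin.finrank_range_add_finrank_ker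
  rw [Module.finrank_fin_fun] at hsum
  unfold Matrix.rank
  omega

theorem kapRank_A_le_five :
    (∃ B : Matrix (Fin 6) (Fin 6) K, IsLift B A ∧ B.rank ≤ 5) ∧ kapRank A ≤ 5 := by
  obtain ⟨B, hB, h1⟩ := exists_isLift_mulVec_one_eq_zero A ![0, 0, 2, 2, 4, 4] ![1, 1, 3, 3, 5, 5]
    (by decide) (by intro i; fin_cases i <;> rfl) (by intro i; fin_cases i <;> rfl)
    (by intro i j; fin_cases i <;> fin_cases j <;> simp [A])
  have hr : B.rank ≤ 5 := Nat.le_of_lt_succ (rank_lt_of_mulVec_one_eq_zero B h1)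
  have hk : kapRank A ≤ B.rank := Nat.sInf_le ⟨B, hB, rfl⟩
  exact ⟨⟨B, hB, hr⟩, hk.trans hr⟩
end
end

section
/- Let H ∈ K^{6×6} be any lift of A, and let H₂₅ denote the determinant of the 5×5 submatrix of H obtained by deleting row 2 and column 5. Then there is a sign ε ∈ {1, −1} such that the element g₁ = ε·H₂₅ − h₁₂h₃₄h₄₁h₅₆h₆₃ − h₁₂(h₃₃h₄₄ − h₃₄h₄₃)h₅₆h₆₁ of K is either zero or has order at least 4. -/
/-!
Let `O` be the ring of Hahn series of nonnegative order and `I` its ideal of series of order at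
least `4`. Every entry of a lift `H` of `A` lies in `O`, and every entry over a `4` of `A` lies
in `I`. In `O ⧸ I` the submatrix obtained by deleting row 2 and column 5 becomes (with the
original one-based labels)

  `h₁₁ h₁₂  0   0   0 `
  ` 0   0  h₃₃ h₃₄  0 `
  `h₄₁  0  h₄₃ h₄₄  0 `
  ` 0   0   0   0  h₅₆`
  `h₆₁  0  h₆₃  0  h₆₆`

whose determinant is exactly `h₁₂ h₅₆ (h₃₄ h₄₁ h₆₃ + (h₃₃ h₄₄ - h₃₄ h₄₃) h₆₁)`. Hence the claim
holds with `ε = 1`.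
-/

noncomputable section

/-- The ring of Hahn series of nonnegative order. The condition uses `orderTop`, so that the zero
series counts as having infinite order. -/
def nonnegRing : Subring K where
  carrier := {x | 0 ≤ x.orderTop}
  mul_mem' {x y} hx hy := by
    simp only [Set.mem_ofPred_eq] at *
    rw [HahnSeries.orderTop_mul]
    exact add_nonneg hx hy
  one_mem' := by simp
  add_mem' {x y} hx hy := by
    simp only [Set.mem_ofPred_eq] at *
    exact (le_min hx hy).trans HahnSeries.min_orderTop_le_orderTop_add
  zero_mem' := by simp
  neg_mem' {x} hx := by simpa using hx

lemma mem_nonnegRing {x : K} : x ∈ nonnegRing ↔ 0 ≤ x.orderTop :=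
  Set.mem_ofPred

/-- The ideal of `nonnegRing` of Hahn series of order at least `4`, zero included. -/
def fourIdeal : Ideal nonnegRing where
  carrier := {x | ((4 : ℝ) : WithTop ℝ) ≤ (x : K).orderTop}
  add_mem' {x y} hx hy := by
    simp only [Set.mem_ofPred_eq] at *
    exact (le_min hx hy).trans HahnSeries.min_orderTop_le_orderTop_add
  zero_mem' := by simp
  smul_mem' c x hx := by
    simp only [Set.mem_ofPred_eq, smul_eq_mul, Subring.coe_mul] at *
    rw [HahnSeries.orderTop_mul]
    exact hx.trans (le_add_of_nonneg_left (mem_nonnegRing.1 c.2))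

lemma mem_fourIdeal {x : nonnegRing} :
    x ∈ fourIdeal ↔ ((4 : ℝ) : WithTop ℝ) ≤ (x : K).orderTop :=
  Set.mem_ofPred

/-- Let the entries of `M` over the `4`s of `A` lie in an ideal `I`. Modulo `I`, the minor of `M`
obtained by deleting row 2 and column 5 consists of the three monomials subtracted here. -/
lemma minor25_sub_mem {R : Type*} [CommRing R] (I : Ideal R) (M : Matrix (Fin 6) (Fin 6) R)
    (hM : ∀ i j, A i j = 4 → M i j ∈ I) :
    (M.submatrix (Fin.succAbove 1) (Fin.succAbove 4)).det
      - M 0 1 * M 2 3 * M 3 0 * M 4 5 * M 5 2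
      - M 0 1 * (M 2 2 * M 3 3 - M 2 3 * M 3 2) * M 4 5 * M 5 0 ∈ I := by
  let q := Ideal.Quotient.mk I
  have hq : ∀ i j, A i j = 4 → q (M i j) = 0 := fun i j h =>
    Ideal.Quotient.eq_zero_iff_mem.2 (hM i j h)
  have hN : q.mapMatrix (M.submatrix (Fin.succAbove 1) (Fin.succAbove 4)) =
                !![q (M 0 0), q (M 0 1), 0, 0, 0;
                   0, 0, q (M 2 2), q (M 2 3), 0;
                   q (M 3 0), 0, q (M 3 2), q (M 3 3), 0;
                   0, 0, 0, 0, q (M 4 5);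
                   q (M 5 0), 0, q (M 5 2), 0, q (M 5 5)] := by
    ext i j
    fin_cases i <;> fin_cases j <;> first | rfl | exact hq _ _ rfl
  rw [← Ideal.Quotient.eq_zero_iff_mem]
  change q _ = 0
  simp only [map_sub, map_mul, RingHom.map_det, hN]
  simp [Matrix.det_succ_row_zero, Fin.sum_univ_succ, Fin.succAbove]
  ring

/-- The same congruence, for a matrix over a ring `L` whose entries lie in a subring `O`. -/
lemma exists_mem_eq_minor25_sub {L : Type*} [CommRing L] (O : Subring L) (I : Ideal O)
    (H : Matrix (Fin 6) (Fin 6) L) (hO : ∀ i j, H i j ∈ O)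
    (hI : ∀ i j, A i j = 4 → (⟨H i j, hO i j⟩ : O) ∈ I) :
    ∃ x ∈ I, (x : L) = (H.submatrix (Fin.succAbove 1) (Fin.succAbove 4)).det
      - H 0 1 * H 2 3 * H 3 0 * H 4 5 * H 5 2
      - H 0 1 * (H 2 2 * H 3 3 - H 2 3 * H 3 2) * H 4 5 * H 5 0 := by
  refine ⟨_, minor25_sub_mem I (fun i j => ⟨H i j, hO i j⟩) hI, ?_⟩
  rw [← Subring.subtype_apply]
  simp only [map_sub, map_mul, RingHom.map_det]
  rfl

theorem minor25_expansion (H : Matrix (Fin 6) (Fin 6) K) (hH : IsLift H A) :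
    ∃ ε : K, (ε = 1 ∨ ε = -1) ∧
      (let H₂₅ : K := ((H.submatrix (Fin.succAbove 1) (Fin.succAbove 4)).det)
       let g₁ : K := ε * H₂₅ - H 0 1 * H 2 3 * H 3 0 * H 4 5 * H 5 2
          - H 0 1 * (H 2 2 * H 3 3 - H 2 3 * H 3 2) * H 4 5 * H 5 0
       g₁ = 0 ∨ 4 ≤ g₁.order) := by
  have hord : ∀ i j, (H i j).orderTop = ((A i j : ℝ) : WithTop ℝ) := fun i j => by
    rw [← (hH i j).2, HahnSeries.order_eq_orderTop_of_ne_zero (hH i j).1]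
  have hnonneg : ∀ i j, H i j ∈ nonnegRing := fun i j => by
    rw [mem_nonnegRing, hord]
    norm_cast
    fin_cases i <;> fin_cases j <;> simp [A]
  have hfour : ∀ i j, A i j = 4 → (⟨H i j, hnonneg i j⟩ : nonnegRing) ∈ fourIdeal :=
    fun i j h => by rw [mem_fourIdeal, hord, h]
  obtain ⟨x, hx, hxg⟩ := exists_mem_eq_minor25_sub nonnegRing fourIdeal H hnonneg hfour
  refine ⟨1, Or.inl rfl, ?_⟩
  intro H₂₅ g₁
  have h4 : ((4 : ℝ) : WithTop ℝ) ≤ g₁.orderTop := by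
    rw [mem_fourIdeal, hxg] at hx
    simpa only [g₁, one_mul] using hx
  by_cases h0 : g₁ = 0
  · exact Or.inl h0
  · right
    rw [← HahnSeries.order_eq_orderTop_of_ne_zero h0] at h4
    exact_mod_cast h4
end
end

section
/- Let H ∈ K^{6×6} be any lift of A, and let H₆₁ denote the determinant of the 5×5 submatrix of H obtained by deleting row 6 and column 1. Then there is a sign ε ∈ {1, −1} such that the element g₂ = ε·H₆₁ − h₁₂h₂₅(h₃₃h₄₄ − h₃₄h₄₃)h₅₆ of K is either zero or has order at least 4. -/
/-!
Everything happens modulo the elements of order at least `4`, which absorb products with elements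
of nonnegative order; every minor of a lift of `A` has nonnegative order. In the `5 × 5` matrix with
rows `0, …, 4` and columns `1, …, 5` of `H`, the last column is small except for its last entry
`H 4 5`, so the determinant is congruent to `H 4 5` times a `4 × 4` minor. The first row of that
minor is small except for `H 0 1`. The remaining `3 × 3` minor has orders
`(2, 4, 1; 0, 0, 4; 0, 0, 2)`, and the only summands of its determinant of order less than `4` are
those of `H 1 4 * (H 2 2 * H 3 3 - H 2 3 * H 3 2)`. All signs turn out to be `+1`.
-/

noncomputable section

/-- The order of `x` is at least `c`, the order of `0` being `∞`. -/
def OrdGE (c : ℝ) (x : K) : Prop := (c : WithTop ℝ) ≤ HahnSeries.addVal ℝ ℂ x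

namespace OrdGE

variable {c d : ℝ} {x y : K}

lemma add (hx : OrdGE c x) (hy : OrdGE c y) : OrdGE c (x + y) :=
  AddValuation.map_le_add _ hx hy

lemma neg (hx : OrdGE c x) : OrdGE c (-x) := by
  unfold OrdGE at *
  rwa [AddValuation.map_neg]

lemma sub (hx : OrdGE c x) (hy : OrdGE c y) : OrdGE c (x - y) := by
  rw [sub_eq_add_neg]
  exact hx.add hy.neg

lemma mul (hx : OrdGE c x) (hy : OrdGE d y) : OrdGE (c + d) (x * y) := by
  unfold OrdGE at *
  rw [AddValuation.map_mul, WithTop.coe_add]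
  exact add_le_add hx hy

lemma mono (hx : OrdGE c x) (h : d ≤ c) : OrdGE d x :=
  le_trans (WithTop.coe_le_coe.2 h) hx

lemma sum {ι : Type*} (s : Finset ι) (f : ι → K) (h : ∀ i ∈ s, OrdGE c (f i)) :
    OrdGE c (∑ i ∈ s, f i) :=
  AddValuation.map_le_sum _ h

lemma one : OrdGE 0 1 := by
  unfold OrdGE
  rw [AddValuation.map_one, WithTop.coe_zero]

lemma neg_one_pow (n : ℕ) : OrdGE 0 ((-1) ^ n) := by
  rcases _root_.neg_one_pow_eq_or K n with h | h <;> rw [h]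
  · exact one
  · exact one.neg

lemma of_order (hx : x ≠ 0) (h : c ≤ x.order) : OrdGE c x := by
  unfold OrdGE
  rw [HahnSeries.addVal_apply_of_ne hx]
  exact WithTop.coe_le_coe.2 h

lemma order (h : OrdGE c x) (hx : x ≠ 0) : c ≤ x.order := by
  unfold OrdGE at h
  rw [HahnSeries.addVal_apply_of_ne hx] at h
  exact WithTop.coe_le_coe.1 h

lemma det {n : ℕ} (M : Matrix (Fin n) (Fin n) K) (h : ∀ i j, OrdGE 0 (M i j)) :
    OrdGE 0 M.det := by
  induction n with
  | zero => simpa using one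
  | succ n ih =>
    rw [Matrix.det_succ_row_zero]
    refine sum _ _ fun j _ => ?_
    simpa using ((neg_one_pow (j : ℕ)).mul (h 0 j)).mul
      (ih (M.submatrix Fin.succ j.succAbove) fun _ _ => h _ _)

/-- Laplace expansion along a row that is negligible except at one entry: only the
term of that entry survives modulo elements of order at least `c`. -/
lemma det_sub_row {n : ℕ} (M : Matrix (Fin (n + 1)) (Fin (n + 1)) K)
    (h : ∀ i j, OrdGE 0 (M i j)) (i j : Fin (n + 1)) (hc : ∀ k, k ≠ j → OrdGE c (M i k)) :
    OrdGE c (M.det - (-1) ^ (i + j : ℕ) * M i j *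
      (M.submatrix i.succAbove j.succAbove).det) := by
  rw [Matrix.det_succ_row M i, ← Finset.add_sum_erase _ _ (Finset.mem_univ j),
    add_sub_cancel_left]
  refine sum _ _ fun k hk => ?_
  simpa using ((neg_one_pow (i + k : ℕ)).mul (hc k (Finset.ne_of_mem_erase hk))).mul
    (det (M.submatrix i.succAbove k.succAbove) fun _ _ => h _ _)

/-- The column version of `OrdGE.det_sub_row`. -/
lemma det_sub_column {n : ℕ} (M : Matrix (Fin (n + 1)) (Fin (n + 1)) K)
    (h : ∀ i j, OrdGE 0 (M i j)) (i j : Fin (n + 1)) (hc : ∀ k, k ≠ i → OrdGE c (M k j)) :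
    OrdGE c (M.det - (-1) ^ (i + j : ℕ) * M i j *
      (M.submatrix i.succAbove j.succAbove).det) := by
  have := det_sub_row M.transpose (fun _ _ => h _ _) j i hc
  rwa [← Matrix.transpose_submatrix, Matrix.det_transpose, Matrix.det_transpose,
    Matrix.transpose_apply, add_comm (j : ℕ)] at this

end OrdGE

theorem minor61_expansion (H : Matrix (Fin 6) (Fin 6) K) (hH : IsLift H A) :
    ∃ ε : K, (ε = 1 ∨ ε = -1) ∧
      (let H₆₁ : K := ((H.submatrix (Fin.succAbove 5) (Fin.succAbove 0)).det)
       let g₂ : K := ε * H₆₁ - H 0 1 * H 1 4 * (H 2 2 * H 3 3 - H 2 3 * H 3 2) * H 4 5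
       g₂ = 0 ∨ 4 ≤ g₂.order) := by
  have hA : ∀ i j, OrdGE (A i j) (H i j) := fun i j =>
    OrdGE.of_order (hH i j).1 (hH i j).2.ge
  have h0 : ∀ i j, OrdGE 0 (H i j) := fun i j => (hA i j).mono (by
    fin_cases i <;> fin_cases j <;> simp [A])
  set M := H.submatrix (Fin.succAbove 5) (Fin.succAbove 0)
  set N := M.submatrix (Fin.succAbove 4) (Fin.succAbove 4)
  set P := N.submatrix (Fin.succAbove 0) (Fin.succAbove 0)
  have e1 : OrdGE 4 (M.det - H 4 5 * N.det) := by
    have := OrdGE.det_sub_column (c := 4) M (fun _ _ => h0 _ _) 4 4 (fun k hk =>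
      (hA _ _).mono (by fin_cases k <;> first | exact absurd rfl hk | simp [A, Fin.succAbove]))
    have hs : (-1 : K) ^ (((4 : Fin 5) : ℕ) + ((4 : Fin 5) : ℕ)) = 1 :=
      Even.neg_one_pow (α := K) ⟨_, rfl⟩
    have he : M 4 4 = H 4 5 := rfl
    rw [hs, one_mul, he] at this
    convert this using 3
  have e2 : OrdGE 4 (N.det - H 0 1 * P.det) := by
    have := OrdGE.det_sub_row (c := 4) N (fun _ _ => h0 _ _) 0 0 (fun k hk =>
      (hA _ _).mono (by fin_cases k <;> first | exact absurd rfl hk | simp [A, Fin.succAbove]))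
    have hs : (-1 : K) ^ (((0 : Fin 4) : ℕ) + ((0 : Fin 4) : ℕ)) = 1 :=
      Even.neg_one_pow (α := K) ⟨_, rfl⟩
    have he : N 0 0 = H 0 1 := rfl
    rwa [hs, one_mul, he] at this
  -- The three remaining summands have order at least `2 + 2`, `4` and `4` respectively.
  have e3 : OrdGE 4 (P.det - H 1 4 * (H 2 2 * H 3 3 - H 2 3 * H 3 2)) := by
    have hdet : P.det - H 1 4 * (H 2 2 * H 3 3 - H 2 3 * H 3 2) =
        H 1 2 * H 3 4 * H 2 3 - H 2 4 * (H 1 2 * H 3 3)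
          - H 1 3 * (H 2 2 * H 3 4 - H 2 4 * H 3 2) := by
      rw [Matrix.det_fin_three]
      change H 1 2 * H 2 3 * H 3 4 - H 1 2 * H 2 4 * H 3 3 - H 1 3 * H 2 2 * H 3 4
        + H 1 3 * H 2 4 * H 3 2 + H 1 4 * H 2 2 * H 3 3 - H 1 4 * H 2 3 * H 3 2 - _ = _
      ring
    have h12 : OrdGE 2 (H 1 2) := (hA 1 2).mono (by simp [A])
    have h34 : OrdGE 2 (H 3 4) := (hA 3 4).mono (by simp [A])
    have h24 : OrdGE 4 (H 2 4) := (hA 2 4).mono (by simp [A])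
    have h13 : OrdGE 4 (H 1 3) := (hA 1 3).mono (by simp [A])
    rw [hdet]
    refine (OrdGE.sub ?_ ?_).sub ?_
    · exact ((h12.mul h34).mul (h0 2 3)).mono (by norm_num)
    · exact (h24.mul ((h0 1 2).mul (h0 3 3))).mono (by norm_num)
    · exact (h13.mul (((h0 2 2).mul (h0 3 4)).sub ((h0 2 4).mul (h0 3 2)))).mono (by norm_num)
  -- Both Laplace expansions use a diagonal entry, so no sign appears.
  refine ⟨1, Or.inl rfl, ?_⟩
  intro H₆₁ g₂
  have hg : g₂ = (M.det - H 4 5 * N.det) + H 4 5 * (N.det - H 0 1 * P.det)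
      + H 4 5 * H 0 1 * (P.det - H 1 4 * (H 2 2 * H 3 3 - H 2 3 * H 3 2)) := by
    change 1 * M.det - _ = _
    ring
  have hord : OrdGE 4 g₂ := by
    rw [hg]
    refine (e1.add ?_).add ?_
    · exact ((h0 4 5).mul e2).mono (by norm_num)
    · exact (((h0 4 5).mul (h0 0 1)).mul e3).mono (by norm_num)
  exact or_iff_not_imp_left.2 hord.order
end
end

section
/- Let H ∈ K^{6×6} be any lift of A and set Δ = h₃₃h₄₄ − h₃₄h₄₃. If Δ = 0 or the order of Δ is greater than 1, then the determinant of the 5×5 submatrix of H obtained by deleting row 2 and column 5 is nonzero, and its order equals 3. -/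
/-!
The valuation ring `O = {x | 0 ≤ v x}` of `K` has the ideal `I = {x | 3 < v x}`, and every entry of
the `5 × 5` submatrix lies in `O`. Modulo `I` the entries of order `4` vanish, so the determinant is
congruent to that of the sparse matrix obtained by zeroing them (`addVal_det_sub_det`). The sparse
determinant is (`det_sparse`)
`h₁₂ h₅₆ (h₄₁ h₃₄ h₆₃ + Δ h₆₁)`, with `1`-based indices.
The first summand has order `0 + 0 + 2 + 0 + 1 = 3`, and the second has order greater than
`1 + 2 = 3` by the hypothesis on `Δ`. So the determinant differs from a term of order exactly `3`
by an element of `I`.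
-/

noncomputable section

/-- Products of integral elements that agree factorwise modulo the ideal `{x | c < v x}` agree
modulo this ideal. Integrality of the second product is carried along for the induction. -/
theorem addVal_prod_sub_prod {ι : Type*} (s : Finset ι) (f g : ι → K) (c : WithTop ℝ)
    (hc : c < ⊤)
    (hf : ∀ i, 0 ≤ HahnSeries.addVal ℝ ℂ (f i)) (hg : ∀ i, 0 ≤ HahnSeries.addVal ℝ ℂ (g i))
    (hfg : ∀ i, c < HahnSeries.addVal ℝ ℂ (f i - g i)) :
    0 ≤ HahnSeries.addVal ℝ ℂ (∏ i ∈ s, g i) ∧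
      c < HahnSeries.addVal ℝ ℂ (∏ i ∈ s, f i - ∏ i ∈ s, g i) := by
  classical
  induction s using Finset.induction_on with
  | empty => simpa using hc
  | insert a s ha ih =>
    obtain ⟨h1, h2⟩ := ih
    rw [Finset.prod_insert ha, Finset.prod_insert ha]
    refine ⟨?_, ?_⟩
    · rw [AddValuation.map_mul]
      exact add_nonneg (hg a) h1
    · have e : f a * ∏ i ∈ s, f i - g a * ∏ i ∈ s, g i =
          f a * (∏ i ∈ s, f i - ∏ i ∈ s, g i) + (f a - g a) * ∏ i ∈ s, g i := by ring
      rw [e]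
      refine AddValuation.map_lt_add _ ?_ ?_
      · rw [AddValuation.map_mul]
        exact lt_of_lt_of_le h2 (le_add_of_nonneg_left (hf a))
      · rw [AddValuation.map_mul]
        exact lt_of_lt_of_le (hfg a) (le_add_of_nonneg_right h1)

/-- Integral matrices that agree modulo the ideal `{x | c < v x}` have determinants that agree
modulo this ideal. -/
theorem addVal_det_sub_det {n : ℕ} (M N : Matrix (Fin n) (Fin n) K) (c : WithTop ℝ)
    (hc : c < ⊤)
    (hM : ∀ i j, 0 ≤ HahnSeries.addVal ℝ ℂ (M i j))
    (hN : ∀ i j, 0 ≤ HahnSeries.addVal ℝ ℂ (N i j))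
    (hMN : ∀ i j, c < HahnSeries.addVal ℝ ℂ (M i j - N i j)) :
    c < HahnSeries.addVal ℝ ℂ (M.det - N.det) := by
  rw [Matrix.det_apply', Matrix.det_apply', ← Finset.sum_sub_distrib]
  refine AddValuation.map_lt_sum _ hc.ne fun σ _ => ?_
  rw [← mul_sub]
  have h := (addVal_prod_sub_prod Finset.univ (fun i => M (σ i) i) (fun i => N (σ i) i) c hc
    (fun i => hM _ _) (fun i => hN _ _) (fun i => hMN _ _)).2
  rcases Int.units_eq_one_or (Equiv.Perm.sign σ) with hs | hs
  · simpa [hs] using h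
  · simpa [hs, AddValuation.map_sub_swap] using h

theorem det_sparse {R : Type*} [CommRing R] (a b c d e f g k l m n : R) :
    (!![a, b, 0, 0, 0;
        0, 0, c, d, 0;
        e, 0, f, g, 0;
        0, 0, 0, 0, k;
        l, 0, m, 0, n] : Matrix (Fin 5) (Fin 5) R).det =
      b * e * d * m * k + (c * g - d * f) * (b * k * l) := by
  simp [Matrix.det_succ_row_zero, Fin.sum_univ_succ, Fin.succAbove]
  ring

theorem minor25_delta_gt_one (H : Matrix (Fin 6) (Fin 6) K) (hH : IsLift H A)
    (hΔ : H 2 2 * H 3 3 - H 2 3 * H 3 2 = 0 ∨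
      1 < (H 2 2 * H 3 3 - H 2 3 * H 3 2).order) :
    (H.submatrix (Fin.succAbove 1) (Fin.succAbove 4)).det ≠ 0 ∧
    ((H.submatrix (Fin.succAbove 1) (Fin.succAbove 4)).det).order = 3 := by
  have hv : ∀ i j, HahnSeries.addVal ℝ ℂ (H i j) = ((A i j : ℝ) : WithTop ℝ) := fun i j => by
    rw [HahnSeries.addVal_apply_of_ne (hH i j).1, (hH i j).2]
  have hA : ∀ i j, 0 ≤ A i j := by
    intro i j
    fin_cases i <;> fin_cases j <;> norm_num [A]
  have h0 : ∀ i j, 0 ≤ HahnSeries.addVal ℝ ℂ (H i j) := fun i j => by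
    rw [hv]
    exact_mod_cast hA i j
  set M := H.submatrix (Fin.succAbove 1) (Fin.succAbove 4) with hM
  set N : Matrix (Fin 5) (Fin 5) K :=
    !![H 0 0, H 0 1, 0, 0, 0;
       0, 0, H 2 2, H 2 3, 0;
       H 3 0, 0, H 3 2, H 3 3, 0;
       0, 0, 0, 0, H 4 5;
       H 5 0, 0, H 5 2, 0, H 5 5] with hN
  set T := H 0 1 * H 3 0 * H 2 3 * H 5 2 * H 4 5 with hT
  -- each entry of `N` is either the entry of `M` or a zero replacing an entry of order `4`
  have hcase : ∀ i j, N i j = M i j ∨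
      (N i j = 0 ∧ A (Fin.succAbove 1 i) (Fin.succAbove 4 j) = 4) := by
    intro i j
    fin_cases i <;> fin_cases j <;>
      first
      | exact Or.inl rfl
      | exact Or.inr ⟨rfl, rfl⟩
  have hdiff : ((3 : ℝ) : WithTop ℝ) < HahnSeries.addVal ℝ ℂ (M.det - N.det) := by
    refine addVal_det_sub_det M N _ (WithTop.coe_lt_top _) (fun i j => h0 _ _) ?_ ?_
    · intro i j
      rcases hcase i j with h | ⟨h, -⟩
      · rw [h]; exact h0 _ _
      · rw [h]; simp
    · intro i j
      rcases hcase i j with h | ⟨h, h4⟩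
      · rw [h, sub_self, AddValuation.map_zero]
        exact WithTop.coe_lt_top _
      · rw [h, sub_zero, hM, Matrix.submatrix_apply, hv, h4]
        exact WithTop.coe_lt_coe.2 (by norm_num)
  have hTv : HahnSeries.addVal ℝ ℂ T = ((3 : ℝ) : WithTop ℝ) := by
    simp only [hT, AddValuation.map_mul, hv, ← WithTop.coe_add]
    congr 1
    simp [A]
    norm_num
  have hΔv : ((1 : ℝ) : WithTop ℝ) <
      HahnSeries.addVal ℝ ℂ (H 2 2 * H 3 3 - H 2 3 * H 3 2) := by
    by_cases hz : H 2 2 * H 3 3 - H 2 3 * H 3 2 = 0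
    · rw [hz, AddValuation.map_zero]
      exact WithTop.coe_lt_top _
    · rw [HahnSeries.addVal_apply_of_ne hz]
      exact WithTop.coe_lt_coe.2 (hΔ.resolve_left hz)
  have hE : ((3 : ℝ) : WithTop ℝ) < HahnSeries.addVal ℝ ℂ
      ((H 2 2 * H 3 3 - H 2 3 * H 3 2) * (H 0 1 * H 4 5 * H 5 0)) := by
    have h2 : HahnSeries.addVal ℝ ℂ (H 0 1 * H 4 5 * H 5 0) = ((2 : ℝ) : WithTop ℝ) := by
      simp only [AddValuation.map_mul, hv, ← WithTop.coe_add]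
      congr 1
      simp [A]
    rw [AddValuation.map_mul, h2]
    have h3 : ((3 : ℝ) : WithTop ℝ) = ((1 : ℝ) : WithTop ℝ) + ((2 : ℝ) : WithTop ℝ) := by
      rw [← WithTop.coe_add]
      norm_num
    rw [h3]
    exact WithTop.add_lt_add_right WithTop.coe_ne_top hΔv
  have hdet : M.det = T + ((M.det - N.det) +
      (H 2 2 * H 3 3 - H 2 3 * H 3 2) * (H 0 1 * H 4 5 * H 5 0)) := by
    have := det_sparse (H 0 0) (H 0 1) (H 2 2) (H 2 3) (H 3 0) (H 3 2) (H 3 3) (H 4 5)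
      (H 5 0) (H 5 2) (H 5 5)
    rw [hN, this, hT]
    ring
  have hlt : ((3 : ℝ) : WithTop ℝ) < HahnSeries.addVal ℝ ℂ ((M.det - N.det) +
      (H 2 2 * H 3 3 - H 2 3 * H 3 2) * (H 0 1 * H 4 5 * H 5 0)) :=
    AddValuation.map_lt_add _ hdiff hE
  have hval : HahnSeries.addVal ℝ ℂ M.det = ((3 : ℝ) : WithTop ℝ) := by
    rw [hdet, AddValuation.map_add_eq_of_lt_left _ (by rw [hTv]; exact hlt), hTv]
  have hne : M.det ≠ 0 := by
    intro h
    rw [h, AddValuation.map_zero] at hval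
    exact WithTop.top_ne_coe hval
  refine ⟨hne, ?_⟩
  rw [HahnSeries.addVal_apply_of_ne hne] at hval
  exact WithTop.coe_injective hval
end
end

section
/- Let H ∈ K^{6×6} be any lift of A and set Δ = h₃₃h₄₄ − h₃₄h₄₃. If Δ ≠ 0 and the order δ of Δ is less than 1, then the determinant of the 5×5 submatrix of H obtained by deleting row 2 and column 5 is nonzero, and its order equals 2 + δ. -/
/-!
The determinant is expanded over the permutations of `Fin 5`. For a permutation `σ`, every
entry of the submatrix has its order prescribed by `A`, so the order of the `σ`-term is the
corresponding weight, a natural number. Exactly two permutations have weight less than `3`,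
and (with rows and columns numbered from `0`) their terms sum to
`H 5 0 * H 0 1 * H 4 5 * (H 2 2 * H 3 3 - H 2 3 * H 3 2)`, whose order is
`2 + 0 + 0 + δ < 3`. The other terms together have order at least `3`, so by the ultrametric
inequality the order of the determinant is `2 + δ`.
-/

noncomputable section

/-- A Hahn series is nonzero of order `r` exactly when its additive valuation is the finite
value `r`. -/
lemma addVal_eq_coe_iff {x : K} {r : ℝ} :
    HahnSeries.addVal ℝ ℂ x = (r : WithTop ℝ) ↔ x ≠ 0 ∧ x.order = r := by
  by_cases hx : x = 0
  · simp [hx]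
  · rw [HahnSeries.addVal_apply_of_ne hx, WithTop.coe_inj]
    simp [hx]

/-- The orders of the entries of the submatrix of `A` without row `1` and column `4`, as natural
numbers so that statements about them are decidable. -/
def minorWeight : Matrix (Fin 5) (Fin 5) ℕ :=
  !![0, 0, 4, 4, 4;
     4, 4, 0, 0, 4;
     2, 4, 0, 0, 4;
     4, 4, 4, 4, 0;
     2, 4, 1, 4, 0]

lemma submatrix_A_eq (i j : Fin 5) :
    A.submatrix (Fin.succAbove 1) (Fin.succAbove 4) i j = (minorWeight i j : ℝ) := by
  fin_cases i <;> fin_cases j <;> simp [A, minorWeight, Fin.succAbove, Fin.lt_def]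

/-- One of the two permutations (column to row) of weight less than `3`; the other is
`lightPerm₂`. -/
def lightPerm₁ : Equiv.Perm (Fin 5) := (finRotate 5)⁻¹

/-- The second permutation of weight less than `3`; it differs from `lightPerm₁` by
exchanging rows `1` and `2` of the submatrix, the rows of the `2 × 2` minor. -/
def lightPerm₂ : Equiv.Perm (Fin 5) := Equiv.swap 1 2 * (finRotate 5)⁻¹

set_option maxRecDepth 100000 in
lemma three_le_weight : ∀ σ : Equiv.Perm (Fin 5), σ ≠ lightPerm₁ → σ ≠ lightPerm₂ →
    3 ≤ ∑ i, minorWeight (σ i) i := by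
  decide

theorem minor25_delta_lt_one (H : Matrix (Fin 6) (Fin 6) K) (hH : IsLift H A)
    (hΔ : H 2 2 * H 3 3 - H 2 3 * H 3 2 ≠ 0)
    (hδ : (H 2 2 * H 3 3 - H 2 3 * H 3 2).order < 1) :
    (H.submatrix (Fin.succAbove 1) (Fin.succAbove 4)).det ≠ 0 ∧
    ((H.submatrix (Fin.succAbove 1) (Fin.succAbove 4)).det).order =
      2 + (H 2 2 * H 3 3 - H 2 3 * H 3 2).order := by
  have hv : ∀ i j, HahnSeries.addVal ℝ ℂ (H i j) = (A i j : WithTop ℝ) :=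
    fun i j => addVal_eq_coe_iff.2 (hH i j)
  set Δ := H 2 2 * H 3 3 - H 2 3 * H 3 2 with hΔdef
  set M := H.submatrix (Fin.succAbove 1) (Fin.succAbove 4) with hM
  have hMv : ∀ i j, HahnSeries.addVal ℝ ℂ (M i j) = ((minorWeight i j : ℝ) : WithTop ℝ) := by
    intro i j
    rw [← submatrix_A_eq, hM, Matrix.submatrix_apply, Matrix.submatrix_apply, hv]
  let f : Equiv.Perm (Fin 5) → K := fun σ => ((Equiv.Perm.sign σ : ℤ) : K) * ∏ i, M (σ i) i
  have hfv : ∀ σ, HahnSeries.addVal ℝ ℂ (f σ) = ((∑ i, minorWeight (σ i) i : ℕ) : ℝ) := by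
    intro σ
    have hsign : HahnSeries.addVal ℝ ℂ (f σ) = HahnSeries.addVal ℝ ℂ (∏ i, M (σ i) i) := by
      rcases Int.units_eq_one_or (Equiv.Perm.sign σ) with h | h <;>
        simp [f, h, AddValuation.map_neg]
    rw [hsign]
    simp [Fin.prod_univ_five, Fin.sum_univ_five, AddValuation.map_mul, hMv]
  let R : K := ∑ σ ∈ (Finset.univ.erase lightPerm₁).erase lightPerm₂, f σ
  have hR : ((3 : ℝ) : WithTop ℝ) ≤ HahnSeries.addVal ℝ ℂ R := by
    refine AddValuation.map_le_sum _ fun σ hσ => ?_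
    simp only [Finset.mem_erase, Finset.mem_univ, and_true] at hσ
    rw [hfv, WithTop.coe_le_coe]
    exact_mod_cast three_le_weight σ hσ.2 hσ.1
  have hf₁ : f lightPerm₁ = H 5 0 * H 0 1 * H 2 2 * H 3 3 * H 4 5 := by
    have hs : Equiv.Perm.sign lightPerm₁ = 1 := by decide
    simp only [f, hs, Fin.prod_univ_five]
    simp only [Units.val_one, Int.cast_one, one_mul]
    rfl
  have hf₂ : f lightPerm₂ = -(H 5 0 * H 0 1 * H 3 2 * H 2 3 * H 4 5) := by
    have hs : Equiv.Perm.sign lightPerm₂ = -1 := by decide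
    have hp : ∏ i, M (lightPerm₂ i) i = H 5 0 * H 0 1 * H 3 2 * H 2 3 * H 4 5 := by
      rw [Fin.prod_univ_five]
      rfl
    simp only [f, hs, hp]
    push_cast
    ring
  have hdet : M.det = H 5 0 * H 0 1 * H 4 5 * Δ + R := by
    have h₁ := Finset.add_sum_erase Finset.univ f (Finset.mem_univ lightPerm₁)
    have h₂ := Finset.add_sum_erase (Finset.univ.erase lightPerm₁) f
      (a := lightPerm₂) (by decide)
    rw [Matrix.det_apply', ← h₁, ← h₂, hf₁, hf₂, hΔdef]
    ring
  have hmain : HahnSeries.addVal ℝ ℂ (H 5 0 * H 0 1 * H 4 5 * Δ) =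
      ((2 + Δ.order : ℝ) : WithTop ℝ) := by
    rw [AddValuation.map_mul, AddValuation.map_mul, AddValuation.map_mul, hv, hv, hv,
      addVal_eq_coe_iff.2 ⟨hΔ, rfl⟩, ← WithTop.coe_add, ← WithTop.coe_add, ← WithTop.coe_add]
    simp [A]
  have hlt : HahnSeries.addVal ℝ ℂ (H 5 0 * H 0 1 * H 4 5 * Δ) < HahnSeries.addVal ℝ ℂ R := by
    refine lt_of_lt_of_le ?_ hR
    rw [hmain, WithTop.coe_lt_coe]
    linarith
  -- The nonvanishing and the order are one statement about the valuation of the determinant.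
  rw [← addVal_eq_coe_iff, hdet, add_comm _ R, ← hmain]
  exact AddValuation.map_add_eq_of_lt_right _ hlt
end
end

section
/- Let H ∈ K^{6×6} be any lift of A and set Δ = h₃₃h₄₄ − h₃₄h₄₃. If Δ ≠ 0 and the order of Δ equals 1, then the determinant of the 5×5 submatrix of H obtained by deleting row 6 and column 1 is nonzero, and its order equals 2. -/
/-!
Rows and columns are indexed from `0`, and `Δ = h₂₂ h₃₃ - h₂₃ h₃₂`. Write `v` for the order
valuation on `K` (with `v 0 = ⊤`). All entries of a lift of `A` have `v ≥ 0`, hence so do all its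
minors, and every entry listed as `4` contributes only terms of
valuation at least `4`.

In the submatrix with rows `0, …, 4` and columns `1, …, 5`, the last column is `4, 4, 4, 4, 0`
and the first row is `0, 4, 4, 4, 4`. Laplace expansion along these two lines
(`le_map_det_sub_of_column`, `le_map_det_sub_of_row`) therefore shows that modulo valuation `≥ 4`
the minor is `h₄₅ h₀₁` times the `3 × 3` minor on rows `1, 2, 3` and columns `2, 3, 4`, whose
orders are
```
2 4 1
0 0 4
0 0 2
```
This `3 × 3` minor is `h₁₄ Δ` modulo valuation `≥ 4`. Since `v (h₄₅ h₀₁ h₁₄ Δ) = 0 + 0 + 1 + 1 = 2`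
is less than `4`, the ultrametric equality gives valuation exactly `2`, which in particular is
not `⊤`.
-/

noncomputable section

section Laplace

variable {R Γ : Type*} [CommRing R] [LinearOrderedAddCommMonoidWithTop Γ]
  (v : AddValuation R Γ)

lemma le_map_mul {c : Γ} {x y : R} (hx : c ≤ v x) (hy : 0 ≤ v y) : c ≤ v (x * y) := by
  rw [v.map_mul]
  simpa using add_le_add hx hy

lemma map_neg_one_pow (k : ℕ) : v ((-1) ^ k) = 0 := by
  rw [v.map_pow, v.map_neg, v.map_one, nsmul_zero]

lemma map_det_nonneg {n : ℕ} (N : Matrix (Fin n) (Fin n) R) (h0 : ∀ a b, 0 ≤ v (N a b)) :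
    0 ≤ v N.det := by
  induction n with
  | zero => simp
  | succ n ih =>
    rw [Matrix.det_succ_row_zero]
    refine v.map_le_sum fun j _ => le_map_mul v (le_map_mul v ?_ (h0 _ _)) (ih _ fun _ _ => h0 _ _)
    exact (map_neg_one_pow v _).ge

/-- If all entries of `N` are integral and those of row `i` other than `N i j` have valuation at
least `c`, then only the `j`-th term of the Laplace expansion along row `i` matters
modulo valuation `≥ c`. -/
lemma le_map_det_sub_of_row {n : ℕ} {c : Γ} (N : Matrix (Fin (n + 1)) (Fin (n + 1)) R)
    (h0 : ∀ a b, 0 ≤ v (N a b)) (i j : Fin (n + 1)) (hc : ∀ k, k ≠ j → c ≤ v (N i k)) :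
    c ≤ v (N.det - (-1) ^ (i + j : ℕ) * N i j * (N.submatrix i.succAbove j.succAbove).det) := by
  rw [Matrix.det_succ_row N i, ← Finset.add_sum_erase _ _ (Finset.mem_univ j), add_sub_cancel_left]
  refine v.map_le_sum fun k hk => le_map_mul v ?_ (map_det_nonneg v _ fun _ _ => h0 _ _)
  rw [mul_comm]
  exact le_map_mul v (hc k (Finset.ne_of_mem_erase hk)) (map_neg_one_pow v _).ge

lemma le_map_det_sub_of_column {n : ℕ} {c : Γ} (N : Matrix (Fin (n + 1)) (Fin (n + 1)) R)
    (h0 : ∀ a b, 0 ≤ v (N a b)) (i j : Fin (n + 1)) (hc : ∀ k, k ≠ i → c ≤ v (N k j)) :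
    c ≤ v (N.det - (-1) ^ (i + j : ℕ) * N i j * (N.submatrix i.succAbove j.succAbove).det) := by
  have h := le_map_det_sub_of_row v N.transpose (fun a b => h0 b a) j i hc
  rwa [Matrix.det_transpose, ← Matrix.transpose_submatrix, Matrix.det_transpose, add_comm (j : ℕ)]
    at h

end Laplace

theorem minor61_delta_eq_one (H : Matrix (Fin 6) (Fin 6) K) (hH : IsLift H A)
    (hΔ : H 2 2 * H 3 3 - H 2 3 * H 3 2 ≠ 0)
    (hδ : (H 2 2 * H 3 3 - H 2 3 * H 3 2).order = 1) :
    (H.submatrix (Fin.succAbove 5) (Fin.succAbove 0)).det ≠ 0 ∧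
    ((H.submatrix (Fin.succAbove 5) (Fin.succAbove 0)).det).order = 2 := by
  set v := HahnSeries.addVal ℝ ℂ
  have hv (i j) : v (H i j) = ((A i j : ℝ) : WithTop ℝ) := by
    rw [HahnSeries.addVal_apply_of_ne (hH i j).1, (hH i j).2]
  have h0 (i j) : 0 ≤ v (H i j) := by
    rw [hv]
    norm_cast
    fin_cases i <;> fin_cases j <;> simp [A]
  set N := H.submatrix (Fin.succAbove 5) (Fin.succAbove 0)
  set M := N.submatrix (Fin.last 4).succAbove (Fin.last 4).succAbove
  set L := M.submatrix (Fin.succAbove 0) (Fin.succAbove 0)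
  -- Off the diagonal position, the last column of `N` has orders `4, 4, 4, 4`.
  have hN : (4 : ℝ) ≤ v (N.det - H 4 5 * M.det) := by
    have h := le_map_det_sub_of_column v (c := (4 : ℝ)) N (fun _ _ => h0 _ _)
        (Fin.last 4) (Fin.last 4) (by
      intro k hk
      change _ ≤ v (H _ _)
      rw [hv]
      norm_cast
      fin_cases k <;> first | exact absurd rfl hk | exact le_refl (4 : ℝ))
    have e : N (Fin.last 4) (Fin.last 4) = H 4 5 := rfl
    rw [Even.neg_one_pow (by decide), one_mul, e] at h
    convert h
  -- Off the first position, the first row of `M` has orders `4, 4, 4`.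
  have hM : (4 : ℝ) ≤ v (M.det - H 0 1 * L.det) := by
    have h := le_map_det_sub_of_row v (c := (4 : ℝ)) M (fun _ _ => h0 _ _) 0 0 (by
      intro k hk
      change _ ≤ v (H _ _)
      rw [hv]
      norm_cast
      fin_cases k <;> first | exact absurd rfl hk | exact le_refl (4 : ℝ))
    rwa [Even.neg_one_pow (by decide), one_mul] at h
  have hL : (4 : ℝ) ≤ v (L.det - H 1 4 * (H 2 2 * H 3 3 - H 2 3 * H 3 2)) := by
    have e : L.det - H 1 4 * (H 2 2 * H 3 3 - H 2 3 * H 3 2) =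
        H 2 4 * (H 1 3 * H 3 2 - H 1 2 * H 3 3) + H 1 3 * -(H 2 2 * H 3 4)
          + H 1 2 * H 3 4 * H 2 3 := by
      rw [Matrix.det_fin_three]
      change H 1 2 * H 2 3 * H 3 4 - H 1 2 * H 2 4 * H 3 3 - H 1 3 * H 2 2 * H 3 4
        + H 1 3 * H 2 4 * H 3 2 + H 1 4 * H 2 2 * H 3 3 - H 1 4 * H 2 3 * H 3 2 - _ = _
      ring
    -- The valuation bound comes from `h₂₄` and `h₁₃` (order `4`) and `h₁₂ h₃₄` (order `2 + 2`).
    rw [e]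
    have hp (a b c d) : 0 ≤ v (H a b * H c d) := le_map_mul v (h0 _ _) (h0 _ _)
    refine v.map_le_add (v.map_le_add (le_map_mul v ?_ ?_) (le_map_mul v ?_ ?_))
      (le_map_mul v ?_ (h0 _ _))
    · rw [hv]; exact le_refl _
    · exact v.map_le_sub (hp ..) (hp ..)
    · rw [hv]; exact le_refl _
    · rw [v.map_neg]; exact hp ..
    · rw [v.map_mul, hv, hv]
      norm_cast
      rw [show A 1 2 = 2 from rfl, show A 3 4 = 2 from rfl]
      norm_num
  set X := H 4 5 * (H 0 1 * (H 1 4 * (H 2 2 * H 3 3 - H 2 3 * H 3 2)))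
  have hX : v X = (2 : ℝ) := by
    simp only [X, v.map_mul, hv]
    rw [HahnSeries.addVal_apply_of_ne hΔ, hδ]
    norm_cast
    rw [show A 4 5 = 0 from rfl, show A 0 1 = 0 from rfl, show A 1 4 = 1 from rfl]
    norm_num
  have hR : (4 : ℝ) ≤ v (N.det - X) := by
    have e : N.det - X = (N.det - H 4 5 * M.det) + ((M.det - H 0 1 * L.det) * H 4 5
        + (L.det - H 1 4 * (H 2 2 * H 3 3 - H 2 3 * H 3 2)) * H 0 1 * H 4 5) := by
      simp only [X]
      ring
    rw [e]
    exact v.map_le_add hN (v.map_le_add (le_map_mul v hM (h0 _ _))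
      (le_map_mul v (le_map_mul v hL (h0 _ _)) (h0 _ _)))
  have hdet : v N.det = (2 : ℝ) := by
    rw [← hX]
    refine v.map_eq_of_lt_sub (lt_of_lt_of_le ?_ hR)
    rw [hX]
    norm_cast
  have hne : N.det ≠ 0 := by
    rw [← v.ne_top_iff, hdet]
    exact WithTop.coe_ne_top
  rw [HahnSeries.addVal_apply_of_ne hne] at hdet
  exact ⟨hne, WithTop.coe_injective hdet⟩
end
end

section
/- For every lift H ∈ K^{6×6} of A, at least one of the following two 5×5 minors of H is nonzero: the determinant of the submatrix obtained by deleting row 2 and column 5, or the determinant of the submatrix obtained by deleting row 6 and column 1. Consequently every lift of A has rank at least 5 over K. -/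
/-!
Let `v` be the valuation of `K` given by the order.  Every entry of `A` lies in `[0, 4]`, so
replacing the entries of `H` of order `4` by zero changes each minor only by a term of valuation at
least `4` (`le_addVal_det_sub_det`).  Number rows and columns from `1` to `6` and put
`D = h₃₃ h₄₄ - h₃₄ h₄₃`.  After this replacement

* the minor without row `2` and column `5` is `h₁₂ h₅₆ (h₆₁ D + h₃₄ h₄₁ h₆₃)`;
* the minor without row `6` and column `1` is `h₁₂ h₅₆ (h₂₃ h₃₄ h₄₅ + h₂₅ D)`.

Suppose that both minors of `H` vanish, so that the two expressions above have valuation at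
least `4`.  Since `v (h₂₃ h₃₄ h₄₅) = 4` and `v h₂₅ = 1`, the second one forces `v D ≥ 3`.  Then
`v (h₆₁ D) ≥ 5`, so the first one forces `v (h₃₄ h₄₁ h₆₃) ≥ 4`, whereas this valuation is
`0 + 2 + 1 = 3`.
-/

noncomputable section

/-- The order, as an additive valuation on `K` with value `⊤` at zero. -/
abbrev v : AddValuation K (WithTop ℝ) := HahnSeries.addVal ℝ ℂ

/-- Entrywise congruence modulo valuation `c` passes to products of elements of nonnegative
valuation. -/
lemma le_addVal_prod_sub_prod {ι : Type*} (s : Finset ι) (a b : ι → K) (c : WithTop ℝ)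
    (ha : ∀ i, 0 ≤ v (a i)) (hb : ∀ i, 0 ≤ v (b i)) (hab : ∀ i, c ≤ v (a i - b i)) :
    0 ≤ v (∏ i ∈ s, a i) ∧ c ≤ v (∏ i ∈ s, a i - ∏ i ∈ s, b i) := by
  classical
  induction s using Finset.induction_on with
  | empty => simp
  | insert i s hi ih =>
    rw [Finset.prod_insert hi, Finset.prod_insert hi]
    refine ⟨by rw [v.map_mul]; exact add_nonneg (ha i) ih.1, ?_⟩
    have e : a i * ∏ j ∈ s, a j - b i * ∏ j ∈ s, b j
        = (a i - b i) * ∏ j ∈ s, a j + b i * (∏ j ∈ s, a j - ∏ j ∈ s, b j) := by ring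
    rw [e]
    apply v.map_le_add
    · rw [v.map_mul]; exact le_add_of_le_of_nonneg (hab i) ih.1
    · rw [v.map_mul]; exact le_add_of_nonneg_of_le (hb i) ih.2

/-- Entrywise congruence modulo valuation `c` passes to determinants of matrices whose entries have
nonnegative valuation. -/
lemma le_addVal_det_sub_det {n : ℕ} (M N : Matrix (Fin n) (Fin n) K) (c : WithTop ℝ)
    (hM : ∀ i j, 0 ≤ v (M i j)) (hN : ∀ i j, 0 ≤ v (N i j))
    (hMN : ∀ i j, c ≤ v (M i j - N i j)) : c ≤ v (M.det - N.det) := by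
  rw [Matrix.det_apply', Matrix.det_apply', ← Finset.sum_sub_distrib]
  refine v.map_le_sum fun σ _ => ?_
  rw [← mul_sub]
  have h := (le_addVal_prod_sub_prod Finset.univ (fun i => M (σ i) i) (fun i => N (σ i) i) c
    (fun i => hM _ _) (fun i => hN _ _) (fun i => hMN _ _)).2
  have hs : v ((Equiv.Perm.sign σ : ℤ) : K) = 0 := by
    rcases Int.units_eq_one_or (Equiv.Perm.sign σ) with hs | hs <;> simp [hs, v.map_neg]
  rw [v.map_mul, hs, zero_add]
  exact h

lemma addVal_of_isLift {m n : ℕ} {B : Matrix (Fin m) (Fin n) K} {T : Matrix (Fin m) (Fin n) ℝ}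
    (hB : IsLift B T) (i : Fin m) (j : Fin n) : v (B i j) = ((T i j : ℝ) : WithTop ℝ) := by
  rw [v, HahnSeries.addVal_apply_of_ne (hB i j).1, (hB i j).2]

/-- The matrix `H` with the entries at the positions where `A` equals `4` replaced by zero. -/
def trunc (H : Matrix (Fin 6) (Fin 6) K) : Matrix (Fin 6) (Fin 6) K :=
  !![H 0 0, H 0 1, 0, 0, 0, 0;
     H 1 0, H 1 1, H 1 2, 0, H 1 4, 0;
     0, 0, H 2 2, H 2 3, 0, 0;
     H 3 0, 0, H 3 2, H 3 3, H 3 4, 0;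
     0, 0, 0, 0, H 4 4, H 4 5;
     H 5 0, 0, H 5 2, 0, H 5 4, H 5 5]

lemma det_trunc_one_four (H : Matrix (Fin 6) (Fin 6) K) :
    ((trunc H).submatrix (Fin.succAbove 1) (Fin.succAbove 4)).det =
      H 0 1 * H 4 5 * (H 5 0 * (H 2 2 * H 3 3 - H 2 3 * H 3 2) + H 2 3 * H 3 0 * H 5 2) := by
  have e : (trunc H).submatrix (Fin.succAbove 1) (Fin.succAbove 4) =
      !![H 0 0, H 0 1, 0, 0, 0;
         0, 0, H 2 2, H 2 3, 0;
         H 3 0, 0, H 3 2, H 3 3, 0;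
         0, 0, 0, 0, H 4 5;
         H 5 0, 0, H 5 2, 0, H 5 5] := by
    ext1 i j; fin_cases i <;> fin_cases j <;> rfl
  rw [e]
  simp [Matrix.det_succ_row_zero, Fin.sum_univ_succ, Fin.succAbove]
  ring

lemma det_trunc_five_zero (H : Matrix (Fin 6) (Fin 6) K) :
    ((trunc H).submatrix (Fin.succAbove 5) (Fin.succAbove 0)).det =
      H 0 1 * H 4 5 * (H 1 2 * H 2 3 * H 3 4 + H 1 4 * (H 2 2 * H 3 3 - H 2 3 * H 3 2)) := by
  have e : (trunc H).submatrix (Fin.succAbove 5) (Fin.succAbove 0) =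
      !![H 0 1, 0, 0, 0, 0;
         H 1 1, H 1 2, 0, H 1 4, 0;
         0, H 2 2, H 2 3, 0, 0;
         0, H 3 2, H 3 3, H 3 4, 0;
         0, 0, 0, H 4 4, H 4 5] := by
    ext1 i j; fin_cases i <;> fin_cases j <;> rfl
  rw [e]
  simp [Matrix.det_succ_row_zero, Fin.sum_univ_succ, Fin.succAbove]
  ring

/-- The truncation of a lift of `A` computes its minors modulo valuation `4`. -/
lemma four_le_addVal_minor_sub {H : Matrix (Fin 6) (Fin 6) K} (hH : IsLift H A) {n : ℕ}
    (f g : Fin n → Fin 6) :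
    ((4 : ℝ) : WithTop ℝ) ≤ v ((H.submatrix f g).det - ((trunc H).submatrix f g).det) := by
  have hA : ∀ i j, 0 ≤ A i j := by
    intro i j; fin_cases i <;> fin_cases j <;> norm_num [A]
  have hv : ∀ i j, 0 ≤ v (H i j) := fun i j => by
    rw [addVal_of_isLift hH]; exact_mod_cast hA i j
  have hT : ∀ i j, trunc H i j = H i j ∨ (trunc H i j = 0 ∧ A i j = 4) := by
    intro i j; fin_cases i <;> fin_cases j <;> simp [trunc, A]
  refine le_addVal_det_sub_det _ _ _ (fun i j => hv _ _) (fun i j => ?_) (fun i j => ?_)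
  · rcases hT (f i) (g j) with h | h
    · simpa [h] using hv (f i) (g j)
    · simp [h.1]
  · rcases hT (f i) (g j) with h | h
    · simp [h]
    · simp only [Matrix.submatrix_apply, h.1, sub_zero, addVal_of_isLift hH, h.2, le_refl]

lemma minor_ne_zero {H : Matrix (Fin 6) (Fin 6) K} (hH : IsLift H A) :
    (H.submatrix (Fin.succAbove 1) (Fin.succAbove 4)).det ≠ 0 ∨
      (H.submatrix (Fin.succAbove 5) (Fin.succAbove 0)).det ≠ 0 := by
  by_contra! hcon
  have h1 := four_le_addVal_minor_sub hH (Fin.succAbove 1) (Fin.succAbove 4)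
  have h2 := four_le_addVal_minor_sub hH (Fin.succAbove 5) (Fin.succAbove 0)
  rw [hcon.1, zero_sub, v.map_neg, det_trunc_one_four] at h1
  rw [hcon.2, zero_sub, v.map_neg, det_trunc_five_zero] at h2
  set D := H 2 2 * H 3 3 - H 2 3 * H 3 2
  have hv := addVal_of_isLift hH
  have e01 : v (H 0 1) = 0 := by rw [hv]; simp [A]
  have e45 : v (H 4 5) = 0 := by rw [hv]; simp [A]
  have e23 : v (H 2 3) = 0 := by rw [hv]; simp [A]
  have e50 : v (H 5 0) = ((2 : ℝ) : WithTop ℝ) := by rw [hv]; simp [A]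
  have e30 : v (H 3 0) = ((2 : ℝ) : WithTop ℝ) := by rw [hv]; simp [A]
  have e34 : v (H 3 4) = ((2 : ℝ) : WithTop ℝ) := by rw [hv]; simp [A]
  have e12 : v (H 1 2) = ((2 : ℝ) : WithTop ℝ) := by rw [hv]; simp [A]
  have e14 : v (H 1 4) = ((1 : ℝ) : WithTop ℝ) := by rw [hv]; simp [A]
  have e52 : v (H 5 2) = ((1 : ℝ) : WithTop ℝ) := by rw [hv]; simp [A]
  rw [v.map_mul, v.map_mul, e01, e45, zero_add, zero_add] at h1 h2
  have h14D : ((4 : ℝ) : WithTop ℝ) ≤ v (H 1 4 * D) := by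
    have := v.map_le_sub h2 (y := H 1 2 * H 2 3 * H 3 4) (by
      rw [v.map_mul, v.map_mul, e12, e23, e34, add_zero, ← WithTop.coe_add]
      norm_num)
    rwa [add_sub_cancel_left] at this
  have hD : ((4 : ℝ) : WithTop ℝ) ≤ v (H 5 0 * D) := by
    refine h14D.trans ?_
    rw [v.map_mul, v.map_mul, e14, e50]
    gcongr
    norm_num
  have h3 := v.map_le_sub h1 hD
  rw [add_sub_cancel_left, v.map_mul, v.map_mul, e23, e30, e52, zero_add, ← WithTop.coe_add,
    WithTop.coe_le_coe] at h3
  norm_num at h3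

lemma le_rank_of_minor_ne_zero {F : Type*} [Field F] {m n r : ℕ} (M : Matrix (Fin m) (Fin n) F)
    (f : Fin r → Fin m) (g : Fin r → Fin n) (h : (M.submatrix f g).det ≠ 0) : r ≤ M.rank := by
  have h1 : (M.submatrix f g).rank = r := by
    simpa using Matrix.rank_of_isUnit (M.submatrix f g)
      ((Matrix.isUnit_iff_isUnit_det _).2 h.isUnit)
  rw [← h1]
  exact Matrix.rank_submatrix_le M f g

theorem every_lift_rank_ge_five (H : Matrix (Fin 6) (Fin 6) K) (hH : IsLift H A) :
    ((H.submatrix (Fin.succAbove 1) (Fin.succAbove 4)).det ≠ 0 ∨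
      (H.submatrix (Fin.succAbove 5) (Fin.succAbove 0)).det ≠ 0) ∧
    5 ≤ H.rank :=
  have h := minor_ne_zero hH
  ⟨h, h.elim (le_rank_of_minor_ne_zero H _ _) (le_rank_of_minor_ne_zero H _ _)⟩
end
end

section
/- The Kapranov rank of the 6×6 real matrix A equals 5. -/
/-!
The odd-numbered rows and columns of `A` form a `3 × 3` block whose diagonal entries are `0` and
whose other entries are `4`. Let `B` be a lift of `A`, split along this block as `[P Q; R T]`.
Then `det P` has order `0`, `P⁻¹` has entries of nonnegative order, and `Q`, `T` are diagonal up to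
terms of order at least `4`. Hence the off-diagonal entries of the Schur complement
`S = T - R P⁻¹ Q` are those of `-R`, scaled by elements of order `0`, up to terms of order at least
`4`: their orders are those of `R` (`orderTop_schur`), namely

  `*  2  1`
  `2  *  2`
  `2  1  *`

If `B` had rank at most `4`, all `2 × 2` minors of `S` would vanish (`det_schur_minor_eq_zero`), and
two of them give `S₀₁ S₁₂ S₂₀ = S₀₂ S₁₁ S₂₀ = S₀₂ S₂₁ S₁₀`. The left side has order `2 + 2 + 2 = 6`
and the right side has order `1 + 1 + 2 = 4`, a contradiction; so every lift has rank at least `5`.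

Conversely, the minimum of each row of `A` is attained twice, so monomial entries can be chosen
everywhere except at one minimal position in each row, where the entry is fixed by requiring that
the row sum to zero. This lift kills the all-ones vector and so has rank at most `5`.
-/

noncomputable section

section Order

variable {x y : K} {a b c : WithTop ℝ}

lemma le_orderTop_add (hx : c ≤ x.orderTop) (hy : c ≤ y.orderTop) : c ≤ (x + y).orderTop :=
  (le_min hx hy).trans HahnSeries.min_orderTop_le_orderTop_add

lemma le_orderTop_neg (hx : c ≤ x.orderTop) : c ≤ (-x).orderTop := by
  rwa [HahnSeries.orderTop_neg]

lemma le_orderTop_sub (hx : c ≤ x.orderTop) (hy : c ≤ y.orderTop) : c ≤ (x - y).orderTop :=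
  (le_min hx hy).trans HahnSeries.min_orderTop_le_orderTop_sub

lemma le_orderTop_mul (hx : a ≤ x.orderTop) (hy : b ≤ y.orderTop) (hc : c ≤ a + b) :
    c ≤ (x * y).orderTop := by
  rw [HahnSeries.orderTop_mul]
  exact hc.trans (add_le_add hx hy)

lemma le_orderTop_mul_right (hx : c ≤ x.orderTop) (hy : 0 ≤ y.orderTop) :
    c ≤ (x * y).orderTop :=
  le_orderTop_mul hx hy (by simp)

lemma le_orderTop_mul_left (hx : 0 ≤ x.orderTop) (hy : c ≤ y.orderTop) :
    c ≤ (x * y).orderTop :=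
  le_orderTop_mul hx hy (by simp)

lemma le_orderTop_sum {ι : Type*} (s : Finset ι) (f : ι → K)
    (h : ∀ i ∈ s, c ≤ (f i).orderTop) : c ≤ (∑ i ∈ s, f i).orderTop :=
  Finset.sum_induction f (fun z => c ≤ z.orderTop) (fun _ _ => le_orderTop_add) (by simp) h

lemma orderTop_inv_eq_zero (hx : x.orderTop = 0) : x⁻¹.orderTop = 0 := by
  have hx0 : x ≠ 0 := by
    rintro rfl
    simp at hx
  have h := HahnSeries.orderTop_mul x x⁻¹
  rwa [mul_inv_cancel₀ hx0, HahnSeries.orderTop_one, hx, zero_add, eq_comm] at h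

lemma isLift_iff {m n : ℕ} (B : Matrix (Fin m) (Fin n) K) (M : Matrix (Fin m) (Fin n) ℝ) :
    IsLift B M ↔ ∀ i j, (B i j).orderTop = (M i j : WithTop ℝ) := by
  refine forall₂_congr fun i j => ⟨fun h => ?_, fun h => ?_⟩
  · rw [← HahnSeries.order_eq_orderTop_of_ne_zero h.1, h.2]
  · have h0 : B i j ≠ 0 := by
      intro h0
      simp [h0] at h
    refine ⟨h0, ?_⟩
    rw [← HahnSeries.order_eq_orderTop_of_ne_zero h0] at h
    exact_mod_cast h

end Order

/-! ### The Schur complement -/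

section Schur

variable {P Q R T : Matrix (Fin 3) (Fin 3) K}

lemma zero_lt_four_withTop : (0 : WithTop ℝ) < 4 := by
  exact_mod_cast (by norm_num : (0 : ℝ) < 4)

lemma orderTop_nonneg_of_diag (hd : ∀ i, (P i i).orderTop = 0)
    (ho : ∀ i j, i ≠ j → 4 ≤ (P i j).orderTop) (i j : Fin 3) : 0 ≤ (P i j).orderTop := by
  by_cases h : i = j
  · subst h
    exact (hd i).ge
  · exact zero_lt_four_withTop.le.trans (ho i j h)

/-- Modulo terms of order at least `4`, `det P` is the product of the diagonal entries. -/
lemma orderTop_det (hd : ∀ i, (P i i).orderTop = 0)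
    (ho : ∀ i j, i ≠ j → 4 ≤ (P i j).orderTop) : P.det.orderTop = 0 := by
  have hn := orderTop_nonneg_of_diag hd ho
  have hmain : (P 0 0 * P 1 1 * P 2 2).orderTop = 0 := by
    simp [HahnSeries.orderTop_mul, hd]
  have hrest : 4 ≤ (-(P 0 0 * P 1 2 * P 2 1) - P 0 1 * P 1 0 * P 2 2 + P 0 1 * P 1 2 * P 2 0
      + P 0 2 * P 1 0 * P 2 1 - P 0 2 * P 1 1 * P 2 0).orderTop := by
    refine le_orderTop_sub (le_orderTop_add (le_orderTop_add (le_orderTop_sub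
      (le_orderTop_neg ?_) ?_) ?_) ?_) ?_
    · exact le_orderTop_mul_right (le_orderTop_mul_left (hn _ _) (ho 1 2 (by decide))) (hn _ _)
    all_goals
      exact le_orderTop_mul_right (le_orderTop_mul_right (ho _ _ (by decide)) (hn _ _)) (hn _ _)
  have hdet : P.det = P 0 0 * P 1 1 * P 2 2 + (-(P 0 0 * P 1 2 * P 2 1) - P 0 1 * P 1 0 * P 2 2
      + P 0 1 * P 1 2 * P 2 0 + P 0 2 * P 1 0 * P 2 1 - P 0 2 * P 1 1 * P 2 0) := by
    rw [Matrix.det_fin_three]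
    ring
  rw [hdet, HahnSeries.orderTop_add_eq_left, hmain]
  rw [hmain]
  exact zero_lt_four_withTop.trans_le hrest

lemma orderTop_adjugate_nonneg (hn : ∀ i j, 0 ≤ (P i j).orderTop) (i j : Fin 3) :
    0 ≤ (P.adjugate i j).orderTop := by
  have hm : ∀ i j k l, 0 ≤ (P i j * P k l).orderTop := fun i j k l =>
    le_orderTop_mul_left (hn _ _) (hn _ _)
  rw [Matrix.adjugate_fin_three]
  fin_cases i <;> fin_cases j <;>
    first
    | exact le_orderTop_sub (hm _ _ _ _) (hm _ _ _ _)
    | exact le_orderTop_add (le_orderTop_neg (hm _ _ _ _)) (hm _ _ _ _)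

lemma orderTop_inv_nonneg (hd : ∀ i, (P i i).orderTop = 0)
    (ho : ∀ i j, i ≠ j → 4 ≤ (P i j).orderTop) (i j : Fin 3) : 0 ≤ (P⁻¹ i j).orderTop := by
  rw [Matrix.inv_def, Ring.inverse_eq_inv', Matrix.smul_apply, smul_eq_mul]
  exact le_orderTop_mul_left (orderTop_inv_eq_zero (orderTop_det hd ho)).ge
    (orderTop_adjugate_nonneg (orderTop_nonneg_of_diag hd ho) i j)

/-- Off the diagonal, the Schur complement agrees with `-R` up to rescaling the columns by units
and terms of order at least `4`, so entries of `R` of order less than `4` keep their order. -/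
lemma orderTop_schur (hPd : ∀ i, (P i i).orderTop = 0)
    (hPo : ∀ i j, i ≠ j → 4 ≤ (P i j).orderTop) (hQd : ∀ i, (Q i i).orderTop = 0)
    (hQo : ∀ i j, i ≠ j → 4 ≤ (Q i j).orderTop) (hR : ∀ i j, 0 ≤ (R i j).orderTop)
    (hTo : ∀ i j, i ≠ j → 4 ≤ (T i j).orderTop) {i j : Fin 3} (hij : i ≠ j)
    (hRij : (R i j).orderTop < 4) :
    ((T - R * P⁻¹ * Q) i j).orderTop = (R i j).orderTop := by
  have hPu : IsUnit P.det := by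
    rw [isUnit_iff_ne_zero]
    intro h
    have := orderTop_det hPd hPo
    simp [h] at this
  have hP0 : ∀ k, P k k ≠ 0 := by
    intro k h
    have := hPd k
    simp [h] at this
  set d : Fin 3 → K := fun k => Q k k / P k k with hd
  have hd0 : ∀ k, (d k).orderTop = 0 := fun k => by
    simp [hd, div_eq_mul_inv, HahnSeries.orderTop_mul, hQd, orderTop_inv_eq_zero (hPd k)]
  -- Subtracting `P * diagonal d` removes the diagonal of `Q`.
  have hE : ∀ k l, 4 ≤ ((Q - P * Matrix.diagonal d) k l).orderTop := by
    intro k l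
    rw [Matrix.sub_apply, Matrix.mul_diagonal]
    by_cases hkl : k = l
    · subst hkl
      simp [hd, mul_div_cancel₀ _ (hP0 k)]
    · exact le_orderTop_sub (hQo k l hkl)
        (le_orderTop_mul_right (hPo k l hkl) (hd0 l).ge)
  have hsplit : T - R * P⁻¹ * Q =
      T - R * (P⁻¹ * (Q - P * Matrix.diagonal d)) - R * Matrix.diagonal d := by
    rw [Matrix.mul_sub, Matrix.nonsing_inv_mul_cancel_left _ _ hPu, Matrix.mul_sub,
      Matrix.mul_assoc]
    abel
  have hhigh : 4 ≤ ((T - R * (P⁻¹ * (Q - P * Matrix.diagonal d))) i j).orderTop := by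
    rw [Matrix.sub_apply]
    refine le_orderTop_sub (hTo i j hij) ?_
    rw [Matrix.mul_apply]
    refine le_orderTop_sum _ _ fun k _ => le_orderTop_mul_left (hR i k) ?_
    rw [Matrix.mul_apply]
    exact le_orderTop_sum _ _ fun l _ =>
      le_orderTop_mul_left (orderTop_inv_nonneg hPd hPo k l) (hE l j)
  have hlow : (-(R i j * d j)).orderTop = (R i j).orderTop := by
    rw [HahnSeries.orderTop_neg, HahnSeries.orderTop_mul, hd0, add_zero]
  rw [hsplit, Matrix.sub_apply, Matrix.mul_diagonal, sub_eq_add_neg,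
    HahnSeries.orderTop_add_eq_right, hlow]
  rw [hlow]
  exact hRij.trans_le hhigh

end Schur

/-! ### Lower bound -/

/-- The odd-numbered positions, counting from one. -/
def oddIdx : Fin 3 → Fin 6 := ![0, 2, 4]

/-- The even-numbered positions, counting from one. -/
def evenIdx : Fin 3 → Fin 6 := ![1, 3, 5]

/-- A `2 × 2` minor of the Schur complement of `P`, multiplied by `det P`, is a `5 × 5` minor
of `B`. -/
lemma det_schur_minor_eq_zero (B : Matrix (Fin 6) (Fin 6) K) (hB : B.rank < 5)
    (hP : (B.submatrix oddIdx oddIdx).det ≠ 0) (f g : Fin 2 → Fin 3) :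
    ((B.submatrix evenIdx evenIdx - B.submatrix evenIdx oddIdx *
      (B.submatrix oddIdx oddIdx)⁻¹ * B.submatrix oddIdx evenIdx).submatrix f g).det = 0 := by
  set P := B.submatrix oddIdx oddIdx with hPdef
  have : Invertible P := P.invertibleOfIsUnitDet (isUnit_iff_ne_zero.mpr hP)
  set C := B.submatrix (Sum.elim oddIdx (evenIdx ∘ f)) (Sum.elim oddIdx (evenIdx ∘ g)) with hC
  have hCdet : C.det = 0 := by
    by_contra h
    have h1 := Matrix.rank_of_isUnit C
      ((Matrix.isUnit_iff_isUnit_det C).mpr (isUnit_iff_ne_zero.mpr h))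
    have h2 : C.rank ≤ B.rank := Matrix.rank_submatrix_le B _ _
    simp at h1
    omega
  have hblocks : C = Matrix.fromBlocks P (B.submatrix oddIdx (evenIdx ∘ g))
      (B.submatrix (evenIdx ∘ f) oddIdx) (B.submatrix (evenIdx ∘ f) (evenIdx ∘ g)) := by
    ext i j
    rcases i with i | i <;> rcases j with j | j <;> rfl
  rw [hblocks, Matrix.det_fromBlocks₁₁, Matrix.invOf_eq_nonsing_inv] at hCdet
  exact (mul_eq_zero.mp hCdet).resolve_left hP

lemma five_le_rank (B : Matrix (Fin 6) (Fin 6) K) (hB : IsLift B A) : 5 ≤ B.rank := by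
  by_contra! hlt
  rw [isLift_iff] at hB
  have hPd : ∀ i, (B.submatrix oddIdx oddIdx i i).orderTop = 0 := by
    intro i
    fin_cases i <;> simp [oddIdx, hB, A]
  have hPo : ∀ i j, i ≠ j → 4 ≤ (B.submatrix oddIdx oddIdx i j).orderTop := by
    intro i j hij
    fin_cases i <;> fin_cases j <;> first | exact absurd rfl hij | simp [oddIdx, hB, A]
  have hQd : ∀ i, (B.submatrix oddIdx evenIdx i i).orderTop = 0 := by
    intro i
    fin_cases i <;> simp [oddIdx, evenIdx, hB, A]
  have hQo : ∀ i j, i ≠ j → 4 ≤ (B.submatrix oddIdx evenIdx i j).orderTop := by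
    intro i j hij
    fin_cases i <;> fin_cases j <;> first | exact absurd rfl hij | simp [oddIdx, evenIdx, hB, A]
  have hTo : ∀ i j, i ≠ j → 4 ≤ (B.submatrix evenIdx evenIdx i j).orderTop := by
    intro i j hij
    fin_cases i <;> fin_cases j <;> first | exact absurd rfl hij | simp [evenIdx, hB, A]
  have hRval : ∀ i j, (B.submatrix evenIdx oddIdx i j).orderTop =
      ((!![0, 2, 1; 2, 0, 2; 2, 1, 0] : Matrix (Fin 3) (Fin 3) ℝ) i j : WithTop ℝ) := by
    intro i j
    fin_cases i <;> fin_cases j <;> simp [oddIdx, evenIdx, hB, A]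
  have hR : ∀ i j, 0 ≤ (B.submatrix evenIdx oddIdx i j).orderTop := by
    intro i j
    rw [hRval]
    norm_cast
    fin_cases i <;> fin_cases j <;> simp
  have hRlt : ∀ i j, (B.submatrix evenIdx oddIdx i j).orderTop < 4 := by
    intro i j
    rw [hRval]
    refine WithTop.coe_lt_coe.mpr (?_ : _ < (4 : ℝ))
    fin_cases i <;> fin_cases j <;> norm_num
  have hdet : (B.submatrix oddIdx oddIdx).det ≠ 0 := by
    intro h
    have := orderTop_det hPd hPo
    simp [h] at this
  have hS : ∀ i j, i ≠ j → _ := fun i j hij =>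
    (orderTop_schur hPd hPo hQd hQo hR hTo hij (hRlt i j)).trans (hRval i j)
  have hminor := det_schur_minor_eq_zero B hlt hdet
  set S := B.submatrix evenIdx evenIdx - B.submatrix evenIdx oddIdx *
      (B.submatrix oddIdx oddIdx)⁻¹ * B.submatrix oddIdx evenIdx
  have h1 : S 0 1 * S 1 2 - S 0 2 * S 1 1 = 0 := by
    have := hminor ![0, 1] ![1, 2]
    rwa [Matrix.det_fin_two] at this
  have h2 : S 1 0 * S 2 1 - S 1 1 * S 2 0 = 0 := by
    have := hminor ![1, 2] ![0, 1]
    rwa [Matrix.det_fin_two] at this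
  have hcycle : S 0 1 * S 1 2 * S 2 0 = S 0 2 * S 2 1 * S 1 0 := by
    linear_combination S 2 0 * h1 - S 0 2 * h2
  have hord := congrArg HahnSeries.orderTop hcycle
  simp only [HahnSeries.orderTop_mul] at hord
  rw [hS 0 1 (by decide), hS 1 2 (by decide), hS 2 0 (by decide), hS 0 2 (by decide),
    hS 2 1 (by decide), hS 1 0 (by decide)] at hord
  -- The entries give `2 + 2 + 2 = 1 + 1 + 2`.
  replace hord : ((2 + 2 + 2 : ℝ) : WithTop ℝ) = ((1 + 1 + 2 : ℝ) : WithTop ℝ) := hord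
  norm_num [WithTop.coe_inj, -WithTop.coe_add] at hord

/-! ### Upper bound -/

/-- The column in which the entry of `lowRankLift` is determined by the vanishing row sum; the
entry of `A` there is `0`. -/
def pivot : Fin 6 → Fin 6 := ![1, 1, 3, 3, 5, 5]

/-- The other column in which `A` has entry `0`. -/
def copivot : Fin 6 → Fin 6 := ![0, 0, 2, 2, 4, 4]

/-- A lift of `A` with monomial entries off the pivots and vanishing row sums. -/
def lowRankLift : Matrix (Fin 6) (Fin 6) K := fun i j =>
  if j = pivot i then -∑ k ∈ Finset.univ.erase (pivot i), HahnSeries.single (A i k) (1 : ℂ)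
  else HahnSeries.single (A i j) 1

lemma isLift_lowRankLift : IsLift lowRankLift A := by
  rw [isLift_iff]
  intro i j
  have hmem : copivot i ∈ Finset.univ.erase (pivot i) := by
    revert i
    decide
  have hpiv : A i (pivot i) = 0 := by
    fin_cases i <;> simp [A, pivot]
  have hco : A i (copivot i) = 0 := by
    fin_cases i <;> simp [A, copivot]
  have hpos : ∀ k, k ≠ pivot i → k ≠ copivot i → 1 ≤ A i k := by
    intro k h1 h2
    fin_cases i <;> fin_cases k <;> first | exact absurd rfl h1 | exact absurd rfl h2 | norm_num [A]
  unfold lowRankLift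
  split_ifs with h
  · subst h
    rw [HahnSeries.orderTop_neg, ← Finset.add_sum_erase _ _ hmem, hpiv, hco]
    have h0 : (HahnSeries.single (0 : ℝ) (1 : ℂ)).orderTop = ((0 : ℝ) : WithTop ℝ) :=
      HahnSeries.orderTop_single one_ne_zero
    rw [HahnSeries.orderTop_add_eq_left, h0]
    rw [h0]
    refine lt_of_lt_of_le (b := ((1 : ℝ) : WithTop ℝ)) (by exact_mod_cast one_pos) ?_
    refine le_orderTop_sum _ _ fun k hk => ?_
    rw [Finset.mem_erase, Finset.mem_erase] at hk
    rw [HahnSeries.orderTop_single one_ne_zero]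
    exact_mod_cast hpos k hk.2.1 hk.1
  · exact HahnSeries.orderTop_single one_ne_zero

lemma rank_lowRankLift_le : lowRankLift.rank ≤ 5 := by
  have hker : lowRankLift.mulVec 1 = 0 := by
    ext1 i
    simp only [Matrix.mulVec, dotProduct, Pi.one_apply, mul_one, Pi.zero_apply]
    rw [← Finset.add_sum_erase _ _ (Finset.mem_univ (pivot i))]
    have hrest : ∑ k ∈ Finset.univ.erase (pivot i), lowRankLift i k =
        ∑ k ∈ Finset.univ.erase (pivot i), HahnSeries.single (A i k) (1 : ℂ) :=
      Finset.sum_congr rfl fun k hk => if_neg (Finset.ne_of_mem_erase hk)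
    have hpiv : lowRankLift i (pivot i) =
        -∑ k ∈ Finset.univ.erase (pivot i), HahnSeries.single (A i k) (1 : ℂ) := if_pos rfl
    rw [hrest, hpiv, neg_add_cancel]
  have hpos : 0 < Module.finrank K (LinearMap.ker lowRankLift.mulVecLin) := by
    have : Nontrivial (LinearMap.ker lowRankLift.mulVecLin) :=
      ⟨⟨1, hker⟩, 0, fun h => one_ne_zero (α := Fin 6 → K) (congrArg Subtype.val h)⟩
    exact Module.finrank_pos (R := K) (M := LinearMap.ker lowRankLift.mulVecLin)
  have hsum := lowRankLift.mulVecLin.finrank_range_add_finrank_ker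
  rw [Module.finrank_fin_fun] at hsum
  rw [Matrix.rank]
  omega

theorem kapRank_A_eq_five : kapRank A = 5 := by
  have hmem : 5 ∈ {r : ℕ | ∃ B : Matrix (Fin 6) (Fin 6) K, IsLift B A ∧ B.rank = r} :=
    ⟨lowRankLift, isLift_lowRankLift,
      le_antisymm rank_lowRankLift_le (five_le_rank _ isLift_lowRankLift)⟩
  refine le_antisymm (Nat.sInf_le hmem) (le_csInf ⟨5, hmem⟩ ?_)
  rintro r ⟨B, hB, rfl⟩
  exact five_le_rank B hB
end
end

section
/- There exists a 6×6 real matrix M whose tropical rank equals 4 and whose Kapranov rank equals 5; in particular, there is a 6×6 real matrix of tropical rank at most 4 whose Kapranov rank exceeds 4, so the 5×5 minors of a 6×6 matrix do not form a tropical basis. -/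
/-!
The witness consists of nine `2 × 2` blocks: the diagonal blocks vanish, and the block in position
`(b, c)`, `b ≠ c`, has all entries `4` except for its lower left entry `e b c ∈ {1, 2}`.

*Tropical rank.* The `4 × 4` submatrix with rows `0, 1, 2, 4` and columns `0, 2, 3, 4` has a unique
optimal permutation. On the other hand every `5 × 5` and `6 × 6` submatrix is singular
(`tropSingular_of_witness`): the blockwise minimum `e` satisfies the triangle inequality, so that
`(-e b ·, e b ·)` is a feasible solution of the linear program dual to the assignment problem.
If row `p` and column `q` are deleted, taking `b` to be the block of `q` shows that it is optimal to
enter the block of `p` directly from that of `q`; then a third block is matched with itself, and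
swapping its two columns gives a second optimal permutation.

*Kapranov rank.* Let `B` be a lift, let `A`, `Z`, `C`, `D` be the `3 × 3` matrices formed by the
upper left, upper right, lower left and lower right entries of its blocks, and let `S = D - C A⁻¹ Z`
be the Schur complement of `A`. Modulo terms of order at least `4`, the matrices `A`, `Z` and `D`
are diagonal with entries of order `0`, so that `S b c` has the order of `C b c`, which is `e b c`,
for `b ≠ c`. If `B` had rank at most `4`, then all `2 × 2` minors of `S` would vanish, whence `S 0 1
* S 1 2 * S 2 0 = S 0 2 * S 2 1 * S 1 0`; but the orders of the two sides are `6` and `4`.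
Conversely, a lift whose rows all sum to zero exists since the entry `0` occurs twice in each row
and is the row minimum; it has rank at most `5`.
-/

noncomputable section

namespace TropKap

/-! ### The matrix -/

/-- The witness, with natural number entries so that its finite properties are decidable. -/
def N : Fin 6 → Fin 6 → ℕ :=
  !![0, 0, 4, 4, 4, 4;
     0, 0, 2, 4, 1, 4;
     4, 4, 0, 0, 4, 4;
     2, 4, 0, 0, 2, 4;
     4, 4, 4, 4, 0, 0;
     2, 4, 1, 4, 0, 0]

/-- The witness as a real matrix. -/
def M : Matrix (Fin 6) (Fin 6) ℝ := Matrix.of fun i j => (N i j : ℝ)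

/-- The minima of the `2 × 2` blocks of `N`. -/
def e : Fin 3 → Fin 3 → ℕ :=
  !![0, 2, 1;
     2, 0, 2;
     2, 1, 0]

/-- The block containing an index. -/
def blk : Fin 6 → Fin 3 := ![0, 0, 1, 1, 2, 2]

/-- The other index of the same block. -/
def bar : Fin 6 → Fin 6 := ![1, 0, 3, 2, 5, 4]

/-- The first index of a block. -/
def ev : Fin 3 → Fin 6 := ![0, 2, 4]

/-- The second index of a block. -/
def od : Fin 3 → Fin 6 := ![1, 3, 5]

lemma N_diag : ∀ a : Fin 3, N (ev a) (ev a) = 0 ∧ N (ev a) (od a) = 0 := by decide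

lemma N_off : ∀ a b : Fin 3, a ≠ b → N (ev a) (ev b) = 4 ∧ N (ev a) (od b) = 4 ∧
    N (od a) (od b) = 4 ∧ N (od a) (ev b) = e a b ∧ e a b < 4 := by decide

lemma N_row : ∀ i, N i i = 0 ∧ N i (bar i) = 0 ∧ i ≠ bar i := by decide

lemma N_pos : ∀ i j, j ≠ i → j ≠ bar i → 0 < N i j := by decide

/-! ### Tropical rank -/

/-- A block different from `a` and `b`. -/
def third (a b : Fin 3) : Fin 3 := if a = b then a + 1 else -(a + b)

/-- A bijection sending `p` to `q` which, with row `p` and column `q` deleted, is an optimal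
assignment. Outside the blocks of `p` and `q` it is the identity. -/
def w (p q x : Fin 6) : Fin 6 :=
  if blk p = blk q then Equiv.swap p q x
  else if x = p then q
  else if x = bar p then od (blk p)
  else if x = od (blk q) then ev (blk p)
  else if x = ev (blk q) then bar q
  else x

/-- The variant of `w` that exchanges the two columns of a third block. -/
def w' (p q x : Fin 6) : Fin 6 :=
  if blk x = third (blk p) (blk q) then bar x else w p q x

lemma w_injective : ∀ p q, Function.Injective (w p q) := by decide

lemma w'_injective : ∀ p q, Function.Injective (w' p q) := by decide

lemma w_self : ∀ p q, w p q p = q ∧ w' p q p = q := by decide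

lemma w_third : ∀ p q, w p q (ev (third (blk p) (blk q))) ≠ w' p q (ev (third (blk p) (blk q))) ∧
    ev (third (blk p) (blk q)) ≠ p := by decide

/-- Dual feasibility of the potentials `-e b ·` on the rows and `e b ·` on the columns. -/
lemma feasible : ∀ b x y, e b (blk y) ≤ N x y + e b (blk x) := by decide

lemma tight : ∀ p q x, x ≠ p → e (blk q) (blk (w p q x)) = N x (w p q x) + e (blk q) (blk x) ∧
    e (blk q) (blk (w' p q x)) = N x (w' p q x) + e (blk q) (blk x) := by decide

lemma tight_self : ∀ p x, e (blk p) (blk (w p p x)) = N x (w p p x) + e (blk p) (blk x) ∧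
    e (blk p) (blk (w' p p x)) = N x (w' p p x) + e (blk p) (blk x) := by decide

lemma tropPerm_eq_of_forall_le {n : ℕ} {S : Matrix (Fin n) (Fin n) ℝ} {σ : Equiv.Perm (Fin n)}
    (h : ∀ τ : Equiv.Perm (Fin n), ∑ i, S i (σ i) ≤ ∑ i, S i (τ i)) :
    ∑ i, S i (σ i) = tropPerm S :=
  le_antisymm (le_ciInf h) (ciInf_le (Set.finite_range _).bddBelow σ)

/-- Weak duality for the assignment problem. -/
lemma tropPerm_eq_of_potential {n : ℕ} {S : Matrix (Fin n) (Fin n) ℝ} {σ : Equiv.Perm (Fin n)}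
    (u v : Fin n → ℝ) (h : ∀ i j, v j ≤ S i j + u i) (ht : ∀ i, v (σ i) = S i (σ i) + u i) :
    ∑ i, S i (σ i) = tropPerm S := by
  refine tropPerm_eq_of_forall_le fun τ => ?_
  have h1 : ∑ i, S i (σ i) = ∑ i, v i - ∑ i, u i := by
    rw [← Equiv.sum_comp σ v, ← Finset.sum_sub_distrib]
    exact Finset.sum_congr rfl fun i _ => by rw [ht]; ring
  rw [h1, ← Equiv.sum_comp τ v, ← Finset.sum_sub_distrib]
  exact Finset.sum_le_sum fun i _ => by linarith [h i (τ i)]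

/-- An injection of row indices into column indices that respects the chosen rows and columns
restricts to a permutation of the positions in the submatrix. -/
lemma exists_perm {r : ℕ} {f g : Fin r → Fin 6} (hf : Function.Injective f)
    {a : Fin 6 → Fin 6} (ha : Function.Injective a) (h : ∀ i, ∃ j, g j = a (f i)) :
    ∃ σ : Equiv.Perm (Fin r), ∀ i, g (σ i) = a (f i) := by
  choose s hs using h
  have hinj : Function.Injective s := fun i j hij =>
    hf (ha (by rw [← hs i, ← hs j, hij]))
  exact ⟨Equiv.ofBijective s (Finite.injective_iff_bijective.1 hinj), hs⟩

lemma tropSingular_of_witness {r : ℕ} {f g : Fin r → Fin 6} (hf : Function.Injective f)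
    (p q : Fin 6) (hfp : ∀ x, x ≠ p → ∃ i, f i = x)
    (h : ∀ i, ∃ j, g j = w p q (f i)) (h' : ∀ i, ∃ j, g j = w' p q (f i))
    (ht : ∀ i, e (blk q) (blk (w p q (f i))) = N (f i) (w p q (f i)) + e (blk q) (blk (f i)) ∧
      e (blk q) (blk (w' p q (f i))) = N (f i) (w' p q (f i)) + e (blk q) (blk (f i))) :
    TropSingular (M.submatrix f g) := by
  obtain ⟨σ, hσ⟩ := exists_perm hf (w_injective p q) h
  obtain ⟨τ, hτ⟩ := exists_perm hf (w'_injective p q) h'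
  have hfeas : ∀ i j, (e (blk q) (blk (g j)) : ℝ) ≤
      M.submatrix f g i j + (e (blk q) (blk (f i)) : ℝ) := fun i j => by
    rw [Matrix.submatrix_apply, M, Matrix.of_apply]
    exact_mod_cast feasible (blk q) (f i) (g j)
  refine ⟨σ, τ, ?_, ?_, ?_⟩
  · rintro rfl
    obtain ⟨h1, h2⟩ := w_third p q
    obtain ⟨i, hi⟩ := hfp _ h2
    rw [← hi] at h1
    exact h1 ((hσ i).symm.trans (hτ i))
  · refine tropPerm_eq_of_potential (fun i => (e (blk q) (blk (f i)) : ℝ))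
      (fun j => (e (blk q) (blk (g j)) : ℝ)) hfeas fun i => ?_
    have := (ht i).1
    rw [← hσ] at this
    rw [Matrix.submatrix_apply, M, Matrix.of_apply]
    exact_mod_cast this
  · refine tropPerm_eq_of_potential (fun i => (e (blk q) (blk (f i)) : ℝ))
      (fun j => (e (blk q) (blk (g j)) : ℝ)) hfeas fun i => ?_
    have := (ht i).2
    rw [← hτ] at this
    rw [Matrix.submatrix_apply, M, Matrix.of_apply]
    exact_mod_cast this

lemma exists_range_eq {f : Fin 5 → Fin 6} (hf : Function.Injective f) :
    ∃ p, (∀ i, f i ≠ p) ∧ ∀ x, x ≠ p → ∃ i, f i = x := by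
  have hc : (Finset.univ.image f)ᶜ.card = 1 := by
    rw [Finset.card_compl, Finset.card_image_of_injective _ hf]; simp
  obtain ⟨p, hp⟩ := Finset.card_eq_one.1 hc
  have key : ∀ x, (∀ i, f i ≠ x) ↔ x = p := fun x => by
    rw [← Finset.mem_singleton, ← hp]; simp
  refine ⟨p, (key p).2 rfl, fun x hx => ?_⟩
  by_contra! hcon
  exact hx ((key x).1 hcon)

lemma tropSingular_five {f g : Fin 5 → Fin 6} (hf : Function.Injective f)
    (hg : Function.Injective g) : TropSingular (M.submatrix f g) := by
  obtain ⟨p, hp, hp'⟩ := exists_range_eq hf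
  obtain ⟨q, -, hq'⟩ := exists_range_eq hg
  refine tropSingular_of_witness hf p q hp' (fun i => hq' _ ?_) (fun i => hq' _ ?_)
    (fun i => tight p q _ (hp i))
  · exact fun h => hp i (w_injective p q (h.trans (w_self p q).1.symm))
  · exact fun h => hp i (w'_injective p q (h.trans (w_self p q).2.symm))

lemma tropSingular_six {f g : Fin 6 → Fin 6} (hf : Function.Injective f)
    (hg : Function.Injective g) : TropSingular (M.submatrix f g) :=
  have hg' := Finite.surjective_of_injective hg
  tropSingular_of_witness hf 0 0 (fun x _ => Finite.surjective_of_injective hf x)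
    (fun _ => hg' _) (fun _ => hg' _) (fun _ => tight_self 0 _)

lemma four_perm_lt : ∀ σ : Equiv.Perm (Fin 4), σ ≠ 1 →
    2 < ∑ i, N (![0, 1, 2, 4] i) (![0, 2, 3, 4] (σ i)) := by decide

lemma not_tropSingular_four :
    ¬ TropSingular (M.submatrix ![0, 1, 2, 4] ![0, 2, 3, 4]) := by
  have hcast : ∀ σ : Equiv.Perm (Fin 4),
      ∑ i, M.submatrix ![0, 1, 2, 4] ![0, 2, 3, 4] i (σ i) =
        ((∑ i, N (![0, 1, 2, 4] i) (![0, 2, 3, 4] (σ i)) : ℕ) : ℝ) := fun σ => by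
    push_cast; rfl
  have huniq : ∀ σ : Equiv.Perm (Fin 4),
      ∑ i, M.submatrix ![0, 1, 2, 4] ![0, 2, 3, 4] i (σ i) =
        tropPerm (M.submatrix ![0, 1, 2, 4] ![0, 2, 3, 4]) → σ = 1 := by
    intro σ hσ
    by_contra hne
    have h1 : tropPerm (M.submatrix ![0, 1, 2, 4] ![0, 2, 3, 4]) ≤ _ :=
      ciInf_le (Set.finite_range _).bddBelow (1 : Equiv.Perm (Fin 4))
    rw [← hσ, hcast, hcast, Nat.cast_le] at h1
    have h2 := four_perm_lt σ hne
    have h3 : ∑ i, N (![0, 1, 2, 4] i) (![0, 2, 3, 4] ((1 : Equiv.Perm (Fin 4)) i)) = 2 := by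
      decide
    omega
  rintro ⟨σ, τ, hne, hσ, hτ⟩
  exact hne ((huniq σ hσ).trans (huniq τ hτ).symm)

lemma tropRank_M : tropRank M = 4 := by
  refine IsGreatest.csSup_eq ⟨⟨![0, 1, 2, 4], ![0, 2, 3, 4], by decide, by decide,
    not_tropSingular_four⟩, ?_⟩
  rintro r ⟨f, g, hf, hg, hs⟩
  by_contra! hr
  have hr6 : r ≤ 6 := by simpa using Fintype.card_le_of_injective f hf
  obtain rfl | rfl : r = 5 ∨ r = 6 := by omega
  · exact hs (tropSingular_five hf hg)
  · exact hs (tropSingular_six hf hg)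

/-! ### Orders of Schur complements -/

section Valuation

variable {F ι : Type*} [Field F] [Fintype ι] [DecidableEq ι] (v : AddValuation F (WithTop ℝ))

/-- The diagonal term of row `k` of `A w`, expressed through the other terms. -/
lemma diag_mul_eq (A : Matrix ι ι F) (y : ι → F) (k : ι) :
    A k k * y k = A.mulVec y k - ∑ l ∈ Finset.univ.erase k, A k l * y l := by
  rw [Matrix.mulVec, dotProduct, ← Finset.add_sum_erase _ _ (Finset.mem_univ k)]
  ring

/-- If `A` is a diagonal matrix with entries of order `0` up to terms of positive order, then the
entries of `y` have order at least the minimal order of the entries of `A y`. -/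
lemma le_of_le_mulVec {A : Matrix ι ι F} (hA : ∀ i, v (A i i) = 0)
    (hA' : ∀ i j, i ≠ j → 0 < v (A i j)) {y : ι → F} {c : WithTop ℝ}
    (h : ∀ k, c ≤ v (A.mulVec y k)) (k : ι) : c ≤ v (y k) := by
  -- A coordinate of `y` of minimal order cannot be cancelled by the other terms in its row.
  obtain ⟨m, -, hm⟩ := Finset.exists_min_image Finset.univ (fun i => v (y i)) ⟨k, Finset.mem_univ k⟩
  refine le_trans ?_ (hm k (Finset.mem_univ k))
  by_contra! hlt
  have htop : v (y m) < ⊤ := lt_of_lt_of_le hlt le_top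
  have h1 : v (y m) < v (A m m * y m) := by
    rw [diag_mul_eq A y m, sub_eq_add_neg]
    refine v.map_lt_add (hlt.trans_le (h m)) ?_
    rw [v.map_neg]
    refine v.map_lt_sum' htop fun l hl => ?_
    rw [v.map_mul]
    have h2 := hA' m l (Finset.ne_of_mem_erase hl).symm
    calc v (y m) = 0 + v (y m) := (zero_add _).symm
      _ < v (A m l) + v (y m) := WithTop.add_lt_add_right htop.ne h2
      _ ≤ v (A m l) + v (y l) := by gcongr; exact hm l (Finset.mem_univ l)
  rw [v.map_mul, hA, zero_add] at h1
  exact lt_irrefl _ h1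

lemma det_ne_zero_of_diag {A : Matrix ι ι F} (hA : ∀ i, v (A i i) = 0)
    (hA' : ∀ i j, i ≠ j → 0 < v (A i j)) : A.det ≠ 0 := by
  intro hdet
  obtain ⟨y, hy, hAy⟩ := Matrix.exists_mulVec_eq_zero_iff.2 hdet
  refine hy (funext fun k => v.top_iff.1 (top_le_iff.1 (le_of_le_mulVec v hA hA' (fun i => ?_) k)))
  rw [hAy]; simp

/-- If `A` and `A * W` are diagonal with entries of order `0` up to terms of order at least `c`, then
so is `W`. -/
lemma order_of_mul_eq {A W Z : Matrix ι ι F} {c : WithTop ℝ} (hc : 0 < c) (hAW : A * W = Z)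
    (hA : ∀ i, v (A i i) = 0) (hA' : ∀ i j, i ≠ j → c ≤ v (A i j))
    (hZ : ∀ i, v (Z i i) = 0) (hZ' : ∀ i j, i ≠ j → c ≤ v (Z i j)) :
    (∀ i, v (W i i) = 0) ∧ ∀ i j, i ≠ j → c ≤ v (W i j) := by
  have hmul : ∀ j, A.mulVec (fun k => W k j) = fun k => Z k j := fun j => by
    rw [← hAW]; rfl
  have hnonneg : ∀ k j, 0 ≤ v (W k j) := fun k j => by
    refine le_of_le_mulVec v hA (fun i j h => hc.trans_le (hA' i j h)) (y := fun k => W k j)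
      (fun i => ?_) k
    rw [hmul]
    by_cases h : i = j
    · subst h; exact (hZ i).ge
    · exact hc.le.trans (hZ' i j h)
  have hrest : ∀ k j, c ≤ v (∑ l ∈ Finset.univ.erase k, A k l * W l j) := fun k j => by
    refine v.map_le_sum fun l hl => ?_
    rw [v.map_mul]
    exact le_add_of_le_of_nonneg (hA' k l (Finset.ne_of_mem_erase hl).symm) (hnonneg l j)
  have hval : ∀ k j, v (W k j) = v (Z k j - ∑ l ∈ Finset.univ.erase k, A k l * W l j) :=
    fun k j => by
    have := diag_mul_eq A (fun k => W k j) k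
    rw [hmul] at this
    rw [← this, v.map_mul, hA, zero_add]
  refine ⟨fun i => ?_, fun i j h => ?_⟩
  · rw [hval, v.map_sub_eq_of_lt_left, hZ]
    rw [hZ]; exact hc.trans_le (hrest i i)
  · rw [hval]; exact v.map_le_sub (hZ' i j h) (hrest i j)

/-- The off-diagonal entries of `D - C * W` have the same order as those of `C`. -/
lemma order_sub_mul {C D W : Matrix ι ι F} {c : WithTop ℝ}
    (hW : ∀ i, v (W i i) = 0) (hW' : ∀ i j, i ≠ j → c ≤ v (W i j)) (hC : ∀ i j, 0 ≤ v (C i j))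
    {i j : ι} (hCij : v (C i j) < c) (hD : c ≤ v (D i j)) :
    v ((D - C * W) i j) = v (C i j) := by
  have hrest : c ≤ v (∑ k ∈ Finset.univ.erase j, C i k * W k j) := by
    refine v.map_le_sum fun k hk => ?_
    rw [v.map_mul]
    exact le_add_of_nonneg_of_le (hC i k) (hW' k j (Finset.ne_of_mem_erase hk))
  have hmain : v (C i j * W j j) = v (C i j) := by rw [v.map_mul, hW, add_zero]
  rw [Matrix.sub_apply, Matrix.mul_apply, ← Finset.add_sum_erase _ _ (Finset.mem_univ j),
    v.map_sub_eq_of_lt_right, v.map_add_eq_of_lt_left, hmain]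
  · rw [hmain]; exact hCij.trans_le hrest
  · rw [v.map_add_eq_of_lt_left, hmain]
    · exact hCij.trans_le hD
    · rw [hmain]; exact hCij.trans_le hrest

end Valuation

/-- If `B` has rank at most `4`, then the `2 × 2` minors of the Schur complement of an invertible
`3 × 3` submatrix of `B` vanish. -/
lemma schur_minor_eq_zero {F : Type*} [Field F] {B : Matrix (Fin 6) (Fin 6) F} (hB : B.rank ≤ 4)
    (hA : (B.submatrix ev ev).det ≠ 0) (i j : Fin 2 → Fin 3) :
    ((B.submatrix od od - B.submatrix od ev * ((B.submatrix ev ev)⁻¹ * B.submatrix ev od)).submatrix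
      i j).det = 0 := by
  let _ : Invertible (B.submatrix ev ev) := Matrix.invertibleOfIsUnitDet _ hA.isUnit
  set G := B.submatrix (Sum.elim ev (od ∘ i)) (Sum.elim ev (od ∘ j)) with hG
  have hG' : G = Matrix.fromBlocks (B.submatrix ev ev) (B.submatrix ev (od ∘ j))
      (B.submatrix (od ∘ i) ev) (B.submatrix (od ∘ i) (od ∘ j)) := by
    ext (a | a) (b | b) <;> rfl
  have hdet : G.det = 0 := by
    by_contra h
    have h1 := Matrix.rank_of_isUnit G ((Matrix.isUnit_iff_isUnit_det G).2 (Ne.isUnit h))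
    have h2 := Matrix.rank_submatrix_le B (Sum.elim ev (od ∘ i)) (Sum.elim ev (od ∘ j))
    rw [← hG, h1] at h2
    simp at h2
    omega
  rw [hG', Matrix.det_fromBlocks₁₁, mul_eq_zero, or_iff_right hA, Matrix.invOf_eq_nonsing_inv,
    Matrix.mul_assoc] at hdet
  exact hdet

/-! ### Kapranov rank -/

/-- The order on `K`, as an additive valuation. -/
abbrev val : AddValuation K (WithTop ℝ) := HahnSeries.addVal ℝ ℂ

lemma isLift_iff {m n : ℕ} {B : Matrix (Fin m) (Fin n) K} {T : Matrix (Fin m) (Fin n) ℝ} :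
    IsLift B T ↔ ∀ i j, val (B i j) = (T i j : WithTop ℝ) := by
  refine forall_congr' fun i => forall_congr' fun j => ⟨fun h => ?_, fun h => ?_⟩
  · rw [HahnSeries.addVal_apply_of_ne h.1, h.2]
  · have hne : B i j ≠ 0 := fun h0 => by
      rw [h0, AddValuation.map_zero] at h
      exact WithTop.top_ne_coe h
    rw [HahnSeries.addVal_apply_of_ne hne] at h
    exact ⟨hne, WithTop.coe_injective h⟩

lemma four_lt_rank_of_isLift {B : Matrix (Fin 6) (Fin 6) K} (h : IsLift B M) : 4 < B.rank := by
  by_contra! hB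
  rw [isLift_iff] at h
  have hN : ∀ i j, val (B i j) = ((N i j : ℝ) : WithTop ℝ) := h
  have hA : ∀ i, val (B.submatrix ev ev i i) = 0 := fun i => by
    rw [Matrix.submatrix_apply, hN, (N_diag i).1]; simp
  have hA' : ∀ i j, i ≠ j → ((4 : ℝ) : WithTop ℝ) ≤ val (B.submatrix ev ev i j) :=
    fun i j hij => by
    rw [Matrix.submatrix_apply, hN, (N_off i j hij).1]; simp
  have hZ : ∀ i, val (B.submatrix ev od i i) = 0 := fun i => by
    rw [Matrix.submatrix_apply, hN, (N_diag i).2]; simp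
  have hZ' : ∀ i j, i ≠ j → ((4 : ℝ) : WithTop ℝ) ≤ val (B.submatrix ev od i j) :=
    fun i j hij => by
    rw [Matrix.submatrix_apply, hN, (N_off i j hij).2.1]; simp
  have h4 : (0 : WithTop ℝ) < ((4 : ℝ) : WithTop ℝ) := by
    exact_mod_cast (by norm_num : (0 : ℝ) < 4)
  have hdet := det_ne_zero_of_diag val hA fun i j hij => h4.trans_le (hA' i j hij)
  set A := B.submatrix ev ev with hAdef
  set Z := B.submatrix ev od with hZdef
  have hAW : A * (A⁻¹ * Z) = Z := by
    rw [← Matrix.mul_assoc, Matrix.mul_nonsing_inv _ hdet.isUnit, Matrix.one_mul]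
  obtain ⟨hW, hW'⟩ := order_of_mul_eq val h4 hAW hA hA' hZ hZ'
  set S := B.submatrix od od - B.submatrix od ev * (A⁻¹ * Z) with hS
  have hval : ∀ i j, i ≠ j → val (S i j) = ((e i j : ℝ) : WithTop ℝ) := fun i j hij => by
    obtain ⟨-, -, h3, h5, h6⟩ := N_off i j hij
    have hC : val (B.submatrix od ev i j) = ((e i j : ℝ) : WithTop ℝ) := by
      rw [Matrix.submatrix_apply, hN, h5]
    rw [hS, order_sub_mul val hW hW', hC]
    · intro k l
      rw [Matrix.submatrix_apply, hN]
      exact_mod_cast Nat.cast_nonneg (α := ℝ) _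
    · rw [hC]
      exact_mod_cast (by exact_mod_cast h6 : (e i j : ℝ) < 4)
    · rw [Matrix.submatrix_apply, hN, h3]; simp
  have m1 := schur_minor_eq_zero hB hdet ![0, 1] ![1, 2]
  have m2 := schur_minor_eq_zero hB hdet ![1, 2] ![0, 1]
  rw [← hAdef, ← hZdef, ← hS, Matrix.det_fin_two] at m1 m2
  simp only [Matrix.submatrix_apply, Matrix.cons_val_zero, Matrix.cons_val_one] at m1 m2
  have hcycle : S 0 1 * S 1 2 * S 2 0 = S 0 2 * S 2 1 * S 1 0 := by
    linear_combination S 2 0 * m1 - S 0 2 * m2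
  have := congrArg val hcycle
  simp only [AddValuation.map_mul] at this
  rw [hval 0 1 (by decide), hval 1 2 (by decide), hval 2 0 (by decide), hval 0 2 (by decide),
    hval 2 1 (by decide), hval 1 0 (by decide)] at this
  norm_cast at this

/-- A lift of `M` all of whose rows sum to zero: in each row, one of the two entries of order `0`
is minus the sum of all others. -/
def lift : Matrix (Fin 6) (Fin 6) K := fun i j =>
  if j = bar i then -∑ l ∈ Finset.univ.erase (bar i), HahnSeries.single (M i l) (1 : ℂ)
  else HahnSeries.single (M i j) 1

lemma val_single (a : ℝ) : val (HahnSeries.single a (1 : ℂ)) = (a : WithTop ℝ) := by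
  rw [HahnSeries.addVal_apply, HahnSeries.orderTop_single one_ne_zero]

lemma isLift_lift : IsLift lift M := by
  rw [isLift_iff]
  intro i j
  unfold lift
  split_ifs with hj
  · subst hj
    obtain ⟨h1, h2, h3⟩ := N_row i
    have hii : M i i = 0 := by simp [M, h1]
    have hib : M i (bar i) = 0 := by simp [M, h2]
    rw [AddValuation.map_neg,
      ← Finset.add_sum_erase _ _ (Finset.mem_erase.2 ⟨h3, Finset.mem_univ i⟩),
      AddValuation.map_add_eq_of_lt_left, val_single, hii, hib]
    refine AddValuation.map_lt_sum' _ ?_ fun l hl => ?_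
    · rw [val_single]; exact WithTop.coe_lt_top _
    · simp only [Finset.mem_erase] at hl
      rw [val_single, val_single, WithTop.coe_lt_coe, hii]
      exact Nat.cast_pos.2 (N_pos i l hl.1 hl.2.1)
  · exact val_single _

lemma rank_lift_le : lift.rank ≤ 5 := by
  have hdet : lift.det = 0 := by
    refine Matrix.exists_mulVec_eq_zero_iff.1 ⟨fun _ => 1, fun h => one_ne_zero (congrFun h 0), ?_⟩
    ext1 i
    rw [Matrix.mulVec, dotProduct, ← Finset.add_sum_erase _ _ (Finset.mem_univ (bar i))]
    have : ∀ l ∈ Finset.univ.erase (bar i), lift i l * 1 = HahnSeries.single (M i l) 1 :=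
      fun l hl => by rw [lift, if_neg (Finset.ne_of_mem_erase hl), mul_one]
    rw [Finset.sum_congr rfl this, lift, if_pos rfl, mul_one, neg_add_cancel]
    rfl
  by_contra! h
  have h6 : lift.rank = 6 := le_antisymm (by simpa using lift.rank_le_width) h
  have hunit : IsUnit lift := by
    rw [← Matrix.linearIndependent_rows_iff_isUnit, linearIndependent_iff_card_eq_finrank_span,
      Set.finrank, ← Matrix.rank_eq_finrank_span_row, h6]
    simp
  rw [Matrix.isUnit_iff_isUnit_det, hdet] at hunit
  exact not_isUnit_zero hunit

lemma kapRank_M : kapRank M = 5 := by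
  have hmem : lift.rank ∈ {r : ℕ | ∃ B : Matrix (Fin 6) (Fin 6) K, IsLift B M ∧ B.rank = r} :=
    ⟨lift, isLift_lift, rfl⟩
  refine le_antisymm ((Nat.sInf_le hmem).trans rank_lift_le) ?_
  refine le_csInf ⟨_, hmem⟩ ?_
  rintro r ⟨B, hB, rfl⟩
  exact four_lt_rank_of_isLift hB

end TropKap

theorem exists_matrix_trop_ne_kap :
    ∃ M : Matrix (Fin 6) (Fin 6) ℝ,
      tropRank M = 4 ∧ kapRank M = 5 ∧ tropRank M ≤ 4 ∧ 4 < kapRank M := by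
  have h1 := TropKap.tropRank_M
  have h2 := TropKap.kapRank_M
  exact ⟨TropKap.M, h1, h2, h1.le, by omega⟩
end
end
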